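/- Let X be a tree and let f : X → X be a continuous map with zero topological entropy. Let x be a chain recurrent point of f that is not periodic, and let I be a periodic arc of f such that ω_f(x) ⊆ Orb_f(I). Then for every n ≥ 0, f^{-n}(x) ∩ CR(f) ⊆ Orb_f(I). -/

import Mathlib

open Set Filter Topology Function
open scoped ENNReal

/-- A subset of a topological space is an *arc* if it is homeomorphic to `[0,1]`. -/
def IsArc {X : Type*} [TopologicalSpace X] (A : Set X) : Prop :=
  Nonempty (A ≃ₜ Set.Icc (0 : ℝ) 1)

/-- A point `p` is an *endpoint* of the arc `A` if `p ∈ A` and `A \ {p}` is connected. -/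
def IsArcEndpoint {X : Type*} [TopologicalSpace X] (A : Set X) (p : X) : Prop :=
  p ∈ A ∧ IsConnected (A \ {p})

/-- A subset is a *simple closed curve* if it is homeomorphic to the unit circle. -/
def IsSimpleClosedCurve {X : Type*} [TopologicalSpace X] (S : Set X) : Prop :=
  Nonempty (S ≃ₜ Metric.sphere (0 : ℂ) 1)

/-- A *tree* is a compact connected metric space which is a union of finitely many arcs,
any two of which are disjoint or intersect only in (one or both of) their endpoints,
and which contains no simple closed curve. -/
def IsTree (X : Type*) [MetricSpace X] : Prop :=
  CompactSpace X ∧ ConnectedSpace X ∧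
    (∃ 𝒜 : Finset (Set X), (∀ A ∈ 𝒜, IsArc A) ∧ ⋃₀ (𝒜 : Set (Set X)) = Set.univ ∧
      ∀ A ∈ 𝒜, ∀ B ∈ 𝒜, A ≠ B → ∀ p ∈ A ∩ B, IsArcEndpoint A p ∧ IsArcEndpoint B p) ∧
    ∀ S : Set X, ¬ IsSimpleClosedCurve S

/-- A *dendrite* is a locally connected continuum containing no simple closed curve. -/
def IsDendrite (X : Type*) [MetricSpace X] : Prop :=
  CompactSpace X ∧ ConnectedSpace X ∧ LocallyConnectedSpace X ∧
    ∀ S : Set X, ¬ IsSimpleClosedCurve S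

/-- `𝒰` is a finite open cover of the subset `Y`. -/
def IsOpenCoverOn {X : Type*} [TopologicalSpace X] (Y : Set X) (𝒰 : Finset (Set X)) : Prop :=
  (∀ U ∈ 𝒰, IsOpen U) ∧ Y ⊆ ⋃₀ (𝒰 : Set (Set X))

/-- `N(⋁_{i=1}^n f^{-a_i}(𝒰))`, relative to the subset `Y`: the minimal number `m` of elements
of the join cover `⋁_{i=1}^n f^{-a_i}(𝒰)` needed to cover `Y`. -/
noncomputable def seqCoverCountOn {X : Type*} (f : X → X) (Y : Set X) (a : ℕ → ℕ)
    (𝒰 : Finset (Set X)) (n : ℕ) : ℕ :=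
  sInf { m | ∃ c : Fin m → Fin n → Set X, (∀ j i, c j i ∈ 𝒰) ∧
    Y ⊆ ⋃ j, ⋂ i, f^[a i.1] ⁻¹' c j i }

/-- Topological sequence entropy of `f` restricted to the (invariant) subset `Y`,
with respect to the sequence `a`. -/
noncomputable def seqEntropyOn {X : Type*} [TopologicalSpace X] (f : X → X) (Y : Set X)
    (a : ℕ → ℕ) : ℝ≥0∞ :=
  ⨆ (𝒰 : Finset (Set X)) (_ : IsOpenCoverOn Y 𝒰),
    Filter.limsup
      (fun n : ℕ => ENNReal.ofReal (Real.log (seqCoverCountOn f Y a 𝒰 n) / n)) Filter.atTop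

/-- Topological sequence entropy of `f : X → X` with respect to the sequence `a`. -/
noncomputable def seqEntropy {X : Type*} [TopologicalSpace X] (f : X → X) (a : ℕ → ℕ) : ℝ≥0∞ :=
  seqEntropyOn f Set.univ a

/-- The ordinary topological entropy `h(f)`, i.e. the sequence entropy for `A = (0,1,2,…)`. -/
noncomputable def topEntropy {X : Type*} [TopologicalSpace X] (f : X → X) : ℝ≥0∞ :=
  seqEntropy f id

/-- `h_∞(f|_Y)`: the supremum over all strictly increasing sequences of positive integers of
the topological sequence entropies of `f` restricted to `Y`. -/
noncomputable def supSeqEntropyOn {X : Type*} [TopologicalSpace X] (f : X → X) (Y : Set X) :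
    ℝ≥0∞ :=
  ⨆ (a : ℕ → ℕ) (_ : StrictMono a) (_ : 1 ≤ a 0), seqEntropyOn f Y a

/-- `h_∞(f)`: the supremum of the topological sequence entropies of `f`. -/
noncomputable def supSeqEntropy {X : Type*} [TopologicalSpace X] (f : X → X) : ℝ≥0∞ :=
  supSeqEntropyOn f Set.univ

/-- The ω-limit set `ω_f(x) = ⋂_n closure {f^k(x) : k ≥ n}`. -/
def omegaLimitSet {X : Type*} [TopologicalSpace X] (f : X → X) (x : X) : Set X :=
  ⋂ n : ℕ, closure ((fun k => f^[k] x) '' Set.Ici n)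

/-- `ω(f) = ⋃_x ω_f(x)`. -/
def omegaSet {X : Type*} [TopologicalSpace X] (f : X → X) : Set X :=
  ⋃ x : X, omegaLimitSet f x

/-- The non-wandering set `Ω(f)`. -/
def nonWanderingSet {X : Type*} [TopologicalSpace X] (f : X → X) : Set X :=
  { x | ∀ U : Set X, IsOpen U → x ∈ U → ∃ n, 1 ≤ n ∧ (f^[n] ⁻¹' U ∩ U).Nonempty }

/-- There is an ε-chain from `x` to `y` under `f`. -/
def EpsChain {X : Type*} [MetricSpace X] (f : X → X) (ε : ℝ) (x y : X) : Prop :=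
  ∃ n, 1 ≤ n ∧ ∃ c : ℕ → X, c 0 = x ∧ c n = y ∧ ∀ i < n, dist (f (c i)) (c (i + 1)) < ε

/-- The chain recurrent set `CR(f)`. -/
def chainRecurrentSet {X : Type*} [MetricSpace X] (f : X → X) : Set X :=
  { x | ∀ ε > 0, EpsChain f ε x x }

/-- The chain recurrent set of the restriction `f|_Y`: chain recurrence witnessed by
ε-chains lying entirely inside `Y`. -/
def chainRecurrentSetOn {X : Type*} [MetricSpace X] (f : X → X) (Y : Set X) : Set X :=
  { x ∈ Y | ∀ ε > 0, ∃ n, 1 ≤ n ∧ ∃ c : ℕ → X, c 0 = x ∧ c n = x ∧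
      (∀ i ≤ n, c i ∈ Y) ∧ ∀ i < n, dist (f (c i)) (c (i + 1)) < ε }

/-- `I` is a periodic arc of `f` of period `s`: an arc with `f^s(I) ⊆ I` whose iterates
`I, f(I), …, f^{s-1}(I)` are pairwise disjoint. -/
def IsPeriodicArc {X : Type*} [TopologicalSpace X] (f : X → X) (I : Set X) (s : ℕ) : Prop :=
  IsArc I ∧ 1 ≤ s ∧ Set.MapsTo f^[s] I I ∧
    ∀ i j, i < j → j < s → Disjoint (f^[i] '' I) (f^[j] '' I)

/-- `Orb_f(I) = I ∪ f(I) ∪ … ∪ f^{s-1}(I)`. -/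
def arcOrbit {X : Type*} (f : X → X) (I : Set X) (s : ℕ) : Set X :=
  ⋃ i ∈ Finset.range s, f^[i] '' I

/-- `I` is an independence set for the pair `(U, V)` under `f`. -/
def IsIndepSetPair {X : Type*} (f : X → X) (U V : Set X) (I : Finset ℕ) : Prop :=
  ∀ J ⊆ I, J.Nonempty → ∀ s : ℕ → Bool,
    (⋂ j ∈ J, f^[j] ⁻¹' (if s j then U else V)).Nonempty

/-- `(x, y)` is an IN-pair of `(X, f)`. -/
def INPair {X : Type*} [TopologicalSpace X] (f : X → X) (x y : X) : Prop :=
  ∀ U ∈ nhds x, ∀ V ∈ nhds y, ∀ m : ℕ, ∃ I : Finset ℕ, m ≤ I.card ∧ IsIndepSetPair f U V I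

/-- The set `IN(X, f)` of IN-pairs of `(X, f)`. -/
def INPairs {X : Type*} [TopologicalSpace X] (f : X → X) : Set (X × X) :=
  { p | INPair f p.1 p.2 }

/-- `(x, y)` is an IN-pair of the restricted (sub)system `(Y, f|_Y)`, for `Y` invariant. -/
def INPairOn {X : Type*} [TopologicalSpace X] (f : X → X) (Y : Set X) (x y : X) : Prop :=
  x ∈ Y ∧ y ∈ Y ∧ ∀ U ∈ nhds x, ∀ V ∈ nhds y, ∀ m : ℕ, ∃ I : Finset ℕ, m ≤ I.card ∧
    ∀ J ⊆ I, J.Nonempty → ∀ s : ℕ → Bool,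
      (Y ∩ ⋂ j ∈ J, f^[j] ⁻¹' (if s j then U else V)).Nonempty

/-- `(x, y)` is a Li–Yorke pair for `f`. -/
def LiYorkePair {X : Type*} [MetricSpace X] (f : X → X) (x y : X) : Prop :=
  Filter.liminf (fun n : ℕ => dist (f^[n] x) (f^[n] y)) Filter.atTop = 0 ∧
    0 < Filter.limsup (fun n : ℕ => dist (f^[n] x) (f^[n] y)) Filter.atTop

def Horseshoe {X : Type*} [TopologicalSpace X] (f : X → X) : Prop :=
  ∃ Q B : Set X, IsCompact Q ∧ IsCompact B ∧ Q.Nonempty ∧ B.Nonempty ∧ Disjoint Q B ∧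
    ∃ n₁ n₂ : ℕ, 1 ≤ n₁ ∧ 1 ≤ n₂ ∧ Q ∪ B ⊆ f^[n₁] '' Q ∧ Q ∪ B ⊆ f^[n₂] '' B

lemma cover_iter {X : Type*} {f : X → X} {Q W : Set X} {n : ℕ} (hQ : Q ⊆ W)
    (h : W ⊆ f^[n] '' Q) (k : ℕ) : W ⊆ f^[n * (k + 1)] '' Q := by
  induction k with
  | zero => simpa using h
  | succ k ih =>
    intro x hx
    obtain ⟨y, hy, rfl⟩ := ih hx
    obtain ⟨z, hz, rfl⟩ := h (hQ hy)
    refine ⟨z, hz, ?_⟩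
    rw [← Function.iterate_add_apply]
    congr 1

lemma word_points {X : Type*} {f : X → X} {Q B : Set X} {T : ℕ} (hq : Q ∪ B ⊆ f^[T] '' Q)
    (hb : Q ∪ B ⊆ f^[T] '' B) (hQ : Q.Nonempty) (hB : B.Nonempty) (L : ℕ) :
    ∀ v : ℕ → Bool, ∃ x, ∀ k ≤ L, f^[k * T] x ∈ (if v k then Q else B) := by
  induction L with
  | zero =>
    intro v
    obtain ⟨x, hx⟩ : (if v 0 then Q else B).Nonempty := by split_ifs <;> assumption
    exact ⟨x, fun k hk => by
      obtain rfl : k = 0 := by omega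
      simpa using hx⟩
  | succ L ih =>
    intro v
    obtain ⟨x', hx'⟩ := ih (fun k => v (k + 1))
    have h1 : x' ∈ Q ∪ B := by
      have := hx' 0 (by omega)
      simp only [zero_mul, iterate_zero, id] at this
      split_ifs at this
      · exact Or.inl this
      · exact Or.inr this
    have h2 : x' ∈ f^[T] '' (if v 0 then Q else B) := by
      split_ifs
      · exact hq h1
      · exact hb h1
    obtain ⟨x, hx, rfl⟩ := h2
    refine ⟨x, fun k hk => ?_⟩
    rcases k with _ | k
    · simpa using hx
    · have := hx' k (by omega)
      rw [← Function.iterate_add_apply] at this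
      have e : (k + 1) * T = k * T + T := by ring
      rw [e]
      exact this

lemma count_ge {X : Type*} {f : X → X} {Q B : Set X} {T : ℕ} (hT : 1 ≤ T)
    (hq : Q ∪ B ⊆ f^[T] '' Q)
    (hb : Q ∪ B ⊆ f^[T] '' B) (hQ : Q.Nonempty) (hB : B.Nonempty) (hd : Disjoint Q B)
    (𝒰 : Finset (Set X)) (h𝒰 : ∀ U, U ∈ 𝒰 ↔ U = Qᶜ ∨ U = Bᶜ) (n : ℕ) :
    2 ^ (n / T) ≤ seqCoverCountOn f Set.univ id 𝒰 n := by
  have hdq : ∀ x, x ∈ Q → x ∈ B → False := fun x h1 h2 => Set.disjoint_left.1 hd h1 h2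
  unfold seqCoverCountOn
  apply le_csInf
  · let e := (Fintype.equivFin (Fin n → 𝒰))
    refine ⟨Fintype.card (Fin n → 𝒰), fun j i => ((e.symm j) i : Set X), fun j i => (e.symm j i).2,
      ?_⟩
    intro x _
    have : ∀ i : Fin n, ∃ U : 𝒰, f^[(i : ℕ)] x ∈ (U : Set X) := by
      intro i
      by_cases h : f^[(i : ℕ)] x ∈ Q
      · exact ⟨⟨Bᶜ, (h𝒰 _).2 (Or.inr rfl)⟩, fun h' => hdq _ h h'⟩
      · exact ⟨⟨Qᶜ, (h𝒰 _).2 (Or.inl rfl)⟩, h⟩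
    choose U hU using this
    simp only [mem_iUnion, mem_iInter]
    refine ⟨e U, fun i => ?_⟩
    simpa using hU i
  · rintro m ⟨c, hc, hcov⟩
    set L := n / T with hL
    have key : ∀ v : Fin L → Bool, ∃ j : Fin m, ∀ k : Fin L, ∃ hk : k.1 * T < n,
        c j ⟨k.1 * T, hk⟩ = if v k then Bᶜ else Qᶜ := by
      intro v
      obtain ⟨x, hx⟩ := word_points hq hb hQ hB L (fun k => if h : k < L then v ⟨k, h⟩ else true)
      have hxm := hcov (mem_univ x)
      simp only [mem_iUnion, mem_iInter] at hxm
      obtain ⟨j, hj⟩ := hxm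
      refine ⟨j, fun k => ?_⟩
      have hk : k.1 * T < n := by
        have h1 : k.1 + 1 ≤ n / T := k.2
        have h2 : (k.1 + 1) * T ≤ n := (Nat.le_div_iff_mul_le (by omega)).1 h1
        nlinarith
      refine ⟨hk, ?_⟩
      have h1 := hx k.1 k.2.le
      have h2 := hj ⟨k.1 * T, hk⟩
      simp only [k.2, dif_pos] at h1
      simp only [id] at h2
      rcases (h𝒰 _).1 (hc j ⟨k.1 * T, hk⟩) with h3 | h3
      · rw [h3] at h2 ⊢
        split_ifs at h1 with h4
        · exact absurd h1 h2
        · simp [h4]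
      · rw [h3] at h2 ⊢
        split_ifs at h1 with h4
        · simp [h4]
        · exact absurd h1 h2
    choose J hJ using key
    have hne : (Bᶜ : Set X) ≠ Qᶜ := by
      intro h
      have : B = Q := compl_injective h
      obtain ⟨x, hx⟩ := hQ
      exact hdq x hx (this ▸ hx)
    have inj : Function.Injective J := by
      intro v w hvw
      funext k
      obtain ⟨hk, h1⟩ := hJ v k
      obtain ⟨_, h2⟩ := hJ w k
      rw [hvw] at h1
      rw [h1] at h2
      cases hv : v k <;> cases hw : w k <;> simp [hv, hw] at h2 ⊢
      · exact hne (by rw [h2])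
      · exact hne (by rw [h2])
    have := Fintype.card_le_of_injective J inj
    simpa using this

theorem entropy_pos_of_horseshoe {X : Type*} [MetricSpace X] {f : X → X}
    (h : Horseshoe f) : topEntropy f ≠ 0 := by
  obtain ⟨Q, B, cQ, cB, hQ, hB, hd, n₁, n₂, h1, h2, c1, c2⟩ := h
  set T := n₁ * n₂ with hTd
  have hT : 1 ≤ T := Nat.one_le_iff_ne_zero.2 (by positivity)
  have hq : Q ∪ B ⊆ f^[T] '' Q := by
    have := cover_iter subset_union_left c1 (n₂ - 1)
    rwa [Nat.sub_add_cancel h2] at this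
  have hb : Q ∪ B ⊆ f^[T] '' B := by
    have := cover_iter subset_union_right c2 (n₁ - 1)
    rwa [Nat.sub_add_cancel h1, mul_comm] at this
  classical
  let 𝒰 : Finset (Set X) := {Qᶜ, Bᶜ}
  have h𝒰 : ∀ U, U ∈ 𝒰 ↔ U = Qᶜ ∨ U = Bᶜ := by intro U; simp [𝒰]
  have hcov : IsOpenCoverOn (Set.univ : Set X) 𝒰 := by
    refine ⟨fun U hU => ?_, fun x _ => ?_⟩
    · rcases (h𝒰 U).1 hU with rfl | rfl
      · exact cQ.isClosed.isOpen_compl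
      · exact cB.isClosed.isOpen_compl
    · by_cases hx : x ∈ Q
      · exact ⟨Bᶜ, by simp [𝒰], fun h' => Set.disjoint_left.1 hd hx h'⟩
      · exact ⟨Qᶜ, by simp [𝒰], hx⟩
  intro h0
  have hle : Filter.limsup
      (fun n : ℕ => ENNReal.ofReal (Real.log (seqCoverCountOn f Set.univ id 𝒰 n) / n))
        Filter.atTop ≤ topEntropy f := by
    unfold topEntropy seqEntropy seqEntropyOn
    exact le_iSup₂_of_le 𝒰 hcov le_rfl
  have hpos : (0 : ℝ) < Real.log 2 / (2 * T) := by
    have : (0 : ℝ) < T := by exact_mod_cast hT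
    have := Real.log_pos (by norm_num : (1 : ℝ) < 2)
    positivity
  have hge : ENNReal.ofReal (Real.log 2 / (2 * T)) ≤ Filter.limsup
      (fun n : ℕ => ENNReal.ofReal (Real.log (seqCoverCountOn f Set.univ id 𝒰 n) / n))
        Filter.atTop := by
    refine Filter.le_limsup_of_frequently_le ?_ (by isBoundedDefault)
    · apply Filter.Eventually.frequently
      filter_upwards [Filter.eventually_ge_atTop T] with n hn
      apply ENNReal.ofReal_le_ofReal
      have hc := count_ge hT hq hb hQ hB hd 𝒰 h𝒰 n
      have hn0 : (0 : ℝ) < n := by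
        have : 0 < n := by omega
        exact_mod_cast this
      have hT0 : (0 : ℝ) < T := by exact_mod_cast hT
      rw [div_le_div_iff₀ (by positivity) hn0]
      have hlog : (n / T : ℕ) * Real.log 2 ≤ Real.log (seqCoverCountOn f Set.univ id 𝒰 n) := by
        rw [← Real.log_pow]
        apply Real.log_le_log (by positivity)
        exact_mod_cast hc
      have hd1 : n ≤ (n / T) * (2 * T) := by
        have h3 : n % T < T := Nat.mod_lt _ (by omega)
        have h4 := Nat.div_add_mod n T
        have h5 : 1 ≤ n / T := (Nat.one_le_div_iff (by omega)).2 hn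
        nlinarith
      have hd2 : (n : ℝ) ≤ (n / T : ℕ) * (2 * T) := by exact_mod_cast hd1
      have hl2 := Real.log_pos (by norm_num : (1 : ℝ) < 2)
      calc Real.log 2 * n ≤ Real.log 2 * ((n / T : ℕ) * (2 * T)) := by gcongr
        _ = ((n / T : ℕ) * Real.log 2) * (2 * T) := by ring
        _ ≤ _ := by gcongr
  rw [h0] at hle
  have := le_trans hge hle
  simp only [nonpos_iff_eq_zero, ENNReal.ofReal_eq_zero] at this
  linarith

def seg {X : Type*} [TopologicalSpace X] (p q : X) : Set X :=
  ⋂₀ {C | IsPreconnected C ∧ p ∈ C ∧ q ∈ C}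

structure ArcFn {X : Type*} [TopologicalSpace X] (γ : ℝ → X) (a c : ℝ) : Prop where
  le : a ≤ c
  cont : ContinuousOn γ (Icc a c)
  inj : InjOn γ (Icc a c)

def ArcIn {X : Type*} [TopologicalSpace X] (Z : Set X) (p q : X) : Prop :=
  ∃ (a c : ℝ) (γ : ℝ → X), ArcFn γ a c ∧ γ a = p ∧ γ c = q ∧ MapsTo γ (Icc a c) Z

noncomputable def gl {X : Type*} (α β : ℝ → X) (t0 u0 : ℝ) : ℝ → X :=
  fun t => if t ≤ t0 then α t else β (t - t0 + u0)

section
set_option linter.unusedSectionVars false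
set_option linter.style.haveILetI false
variable {X : Type*} [MetricSpace X]

lemma ArcFn.sub {γ : ℝ → X} {a c a' c' : ℝ} (h : ArcFn γ a c) (h1 : a ≤ a') (h2 : a' ≤ c')
    (h3 : c' ≤ c) : ArcFn γ a' c' :=
  ⟨h2, h.cont.mono (Icc_subset_Icc h1 h3), h.inj.mono (Icc_subset_Icc h1 h3)⟩

lemma ArcFn.neg {γ : ℝ → X} {a c : ℝ} (h : ArcFn γ a c) : ArcFn (fun t => γ (-t)) (-c) (-a) := by
  have hm : MapsTo (fun t : ℝ => -t) (Icc (-c) (-a)) (Icc a c) := by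
    intro t ht
    constructor <;> [linarith [ht.2]; linarith [ht.1]]
  refine ⟨by linarith [h.le], h.cont.comp continuous_neg.continuousOn hm, ?_⟩
  intro s hs t ht hst
  have := h.inj (hm hs) (hm ht) hst
  simpa using this

lemma ArcFn.neg_image {γ : ℝ → X} {a c : ℝ} :
    (fun t => γ (-t)) '' Icc (-c) (-a) = γ '' Icc a c := by
  ext x
  constructor
  · rintro ⟨t, ht, rfl⟩
    exact ⟨-t, ⟨by linarith [ht.2], by linarith [ht.1]⟩, rfl⟩
  · rintro ⟨t, ht, rfl⟩
    exact ⟨-t, ⟨by linarith [ht.2], by linarith [ht.1]⟩, by simp⟩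

lemma gl_left {α β : ℝ → X} {t0 u0 t : ℝ} (h : t ≤ t0) : gl α β t0 u0 t = α t := by
  simp [gl, h]

lemma gl_right {α β : ℝ → X} {t0 u0 t : ℝ} (h0 : α t0 = β u0) (h : t0 ≤ t) :
    gl α β t0 u0 t = β (t - t0 + u0) := by
  rcases h.eq_or_lt with rfl | h
  · simp [gl, h0]
  · simp [gl, not_le.2 h]

lemma gl_cont {α β : ℝ → X} {a t0 u0 d : ℝ} (h1 : ArcFn α a t0) (h2 : ArcFn β u0 d)
    (h0 : α t0 = β u0) : ContinuousOn (gl α β t0 u0) (Icc a (t0 + (d - u0))) := by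
  have e : Icc a (t0 + (d - u0)) = Icc a t0 ∪ Icc t0 (t0 + (d - u0)) :=
    (Icc_union_Icc_eq_Icc h1.le (by linarith [h2.le])).symm
  rw [e]
  apply ContinuousOn.union_of_isClosed _ _ isClosed_Icc isClosed_Icc
  · exact h1.cont.congr fun t ht => gl_left ht.2
  · have : ContinuousOn (fun t => β (t - t0 + u0)) (Icc t0 (t0 + (d - u0))) := by
      apply h2.cont.comp (by fun_prop)
      intro t ht
      constructor <;> [linarith [ht.1]; linarith [ht.2]]
    exact this.congr fun t ht => gl_right h0 ht.1

lemma ArcIn.refl {Z : Set X} {p : X} (h : p ∈ Z) : ArcIn Z p p :=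
  ⟨0, 0, fun _ => p, ⟨le_rfl, continuousOn_const, by
    intro s hs t ht _
    simp at hs ht
    rw [hs, ht]⟩, rfl, rfl, fun _ _ => h⟩

lemma ArcIn.symm {Z : Set X} {p q : X} (h : ArcIn Z p q) : ArcIn Z q p := by
  obtain ⟨a, c, γ, hγ, rfl, rfl, hm⟩ := h
  refine ⟨-c, -a, _, hγ.neg, by simp, by simp, ?_⟩
  intro t ht
  exact hm ⟨by linarith [ht.2], by linarith [ht.1]⟩

lemma ArcFn.isCompact_image {γ : ℝ → X} {a c : ℝ} (h : ArcFn γ a c) :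
    IsCompact (γ '' Icc a c) := isCompact_Icc.image_of_continuousOn h.cont

lemma first_hit {γ : ℝ → X} {a c : ℝ} (h : ArcFn γ a c) {K : Set X} (hK : IsClosed K)
    (hc : γ c ∈ K) : ∃ t ∈ Icc a c, γ t ∈ K ∧ ∀ s ∈ Icc a t, γ s ∈ K → s = t := by
  have h1 : IsClosed (Icc a c ∩ γ ⁻¹' K) := h.cont.preimage_isClosed_of_isClosed isClosed_Icc hK
  have h2 : IsCompact (Icc a c ∩ γ ⁻¹' K) := isCompact_Icc.of_isClosed_subset h1 inter_subset_left
  obtain ⟨t, ⟨ht, htK⟩, hl⟩ := h2.exists_isLeast ⟨c, ⟨h.le, le_rfl⟩, hc⟩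
  refine ⟨t, ht, htK, fun s hs hsK => le_antisymm hs.2 (hl ⟨⟨hs.1, hs.2.trans ht.2⟩, hsK⟩)⟩

lemma last_hit {γ : ℝ → X} {a c : ℝ} (h : ArcFn γ a c) {K : Set X} (hK : IsClosed K)
    (hc : γ a ∈ K) : ∃ t ∈ Icc a c, γ t ∈ K ∧ ∀ s ∈ Icc t c, γ s ∈ K → s = t := by
  have h1 : IsClosed (Icc a c ∩ γ ⁻¹' K) := h.cont.preimage_isClosed_of_isClosed isClosed_Icc hK
  have h2 : IsCompact (Icc a c ∩ γ ⁻¹' K) := isCompact_Icc.of_isClosed_subset h1 inter_subset_left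
  obtain ⟨t, ⟨ht, htK⟩, hl⟩ := h2.exists_isGreatest ⟨a, ⟨le_rfl, h.le⟩, hc⟩
  refine ⟨t, ht, htK, fun s hs hsK => le_antisymm (hl ⟨⟨ht.1.trans hs.1, hs.2⟩, hsK⟩) hs.1⟩

lemma ArcIn.trans {Z : Set X} {p q r : X} (h : ArcIn Z p q) (h' : ArcIn Z q r) : ArcIn Z p r := by
  obtain ⟨a, c, α, hα, rfl, rfl, hm⟩ := h
  obtain ⟨b, d, β, hβ, hb, rfl, hm'⟩ := h'
  obtain ⟨t0, ht0, ⟨u0, hu0, hu⟩, hfirst⟩ := first_hit hα hβ.isCompact_image.isClosed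
    (by rw [← hb]; exact ⟨b, ⟨le_rfl, hβ.le⟩, rfl⟩)
  have h1 : ArcFn α a t0 := hα.sub le_rfl ht0.1 ht0.2
  have h2 : ArcFn β u0 d := hβ.sub hu0.1 hu0.2 le_rfl
  have hL : a ≤ t0 + (d - u0) := by linarith [ht0.1, hu0.2]
  have key : ∀ s ∈ Icc a (t0 + (d - u0)), ∀ t ∈ Icc a (t0 + (d - u0)), s ≤ t0 → t0 < t →
      gl α β t0 u0 s ≠ gl α β t0 u0 t := by
    intro s hs t ht h3 h4 h5
    rw [gl_left h3, gl_right hu.symm h4.le] at h5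
    have hmem : t - t0 + u0 ∈ Icc b d := ⟨by linarith [hu0.1], by linarith [ht.2]⟩
    have h6 := hfirst s ⟨hs.1, h3⟩ (by rw [h5]; exact ⟨_, hmem, rfl⟩)
    rw [h6, ← hu] at h5
    have := hβ.inj hu0 hmem h5
    linarith
  refine ⟨a, t0 + (d - u0), gl α β t0 u0, ⟨hL, gl_cont h1 h2 hu.symm, ?_⟩, gl_left ht0.1, ?_, ?_⟩
  · intro s hs t ht hst
    rcases le_or_gt s t0 with h3 | h3 <;> rcases le_or_gt t t0 with h4 | h4
    · rw [gl_left h3, gl_left h4] at hst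
      exact h1.inj ⟨hs.1, h3⟩ ⟨ht.1, h4⟩ hst
    · exact absurd hst (key s hs t ht h3 h4)
    · exact absurd hst.symm (key t ht s hs h4 h3)
    · rw [gl_right hu.symm h3.le, gl_right hu.symm h4.le] at hst
      have := h2.inj (x₁ := s - t0 + u0) (x₂ := t - t0 + u0) ⟨by linarith, by linarith [hs.2]⟩ ⟨by linarith, by linarith [ht.2]⟩ hst
      linarith
  · rw [gl_right hu.symm (by linarith [hu0.2])]
    congr 1
    ring
  · intro t ht
    rcases le_or_gt t t0 with h3 | h3
    · rw [gl_left h3]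
      exact hm ⟨ht.1, h3.trans ht0.2⟩
    · rw [gl_right hu.symm h3.le]
      exact hm' ⟨by linarith [hu0.1], by linarith [ht.2]⟩

lemma scc_of_two_arcs {α β : ℝ → X} {a t0 u0 d : ℝ} (h1 : ArcFn α a t0) (h2 : ArcFn β u0 d)
    (hlt : a < t0) (h0 : α t0 = β u0) (h3 : β d = α a)
    (hd : ∀ s ∈ Icc a t0, ∀ u ∈ Icc u0 d, α s = β u → s = a ∨ s = t0) :
    ∃ S : Set X, IsSimpleClosedCurve S := by
  set p := t0 + (d - u0) - a with hp
  have hp0 : 0 < p := by linarith [h2.le]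
  haveI : Fact (0 < p) := ⟨hp0⟩
  have hap : a + p = t0 + (d - u0) := by rw [hp]; ring
  set δ := gl α β t0 u0 with hδ
  have hend : δ (a + p) = β d := by
    rw [hδ, hap, gl_right h0 (by linarith [h2.le])]
    congr 1
    ring
  have hstart : δ a = α a := gl_left h1.le
  have hcont : Continuous (AddCircle.liftIco p a δ) := by
    apply AddCircle.liftIco_continuous
    · rw [hstart, hend, h3]
    · rw [hap]; exact gl_cont h1 h2 h0
  have key : ∀ s ∈ Ico a (a + p), ∀ t ∈ Ico a (a + p), s ≤ t0 → t0 < t → δ s ≠ δ t := by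
    intro s hs t ht h4 h5 h6
    rw [hδ, gl_left h4, gl_right h0 h5.le] at h6
    have hu : t - t0 + u0 ∈ Icc u0 d := ⟨by linarith, by linarith [ht.2]⟩
    rcases hd s ⟨hs.1, h4⟩ _ hu h6 with rfl | rfl
    · rw [← h3] at h6
      have := h2.inj ⟨h2.le, le_rfl⟩ hu h6
      linarith [ht.2]
    · rw [h0] at h6
      have := h2.inj ⟨le_rfl, h2.le⟩ hu h6
      linarith
  have hinj : InjOn δ (Ico a (a + p)) := by
    intro s hs t ht hst
    rcases le_or_gt s t0 with h3 | h3 <;> rcases le_or_gt t t0 with h4 | h4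
    · rw [hδ, gl_left h3, gl_left h4] at hst
      exact h1.inj ⟨hs.1, h3⟩ ⟨ht.1, h4⟩ hst
    · exact absurd hst (key s hs t ht h3 h4)
    · exact absurd hst.symm (key t ht s hs h4 h3)
    · rw [hδ, gl_right h0 h3.le, gl_right h0 h4.le] at hst
      have := h2.inj (x₁ := s - t0 + u0) (x₂ := t - t0 + u0) ⟨by linarith, by linarith [hs.2]⟩ ⟨by linarith, by linarith [ht.2]⟩ hst
      linarith
  have hinj' : Injective (AddCircle.liftIco p a δ) := by
    intro x y hxy
    obtain ⟨s, hs, rfl⟩ : ∃ s ∈ Ico a (a + p), (s : AddCircle p) = x := by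
      have := AddCircle.coe_image_Ico_eq p a
      have h9 : x ∈ QuotientAddGroup.mk '' Ico a (a + p) := by rw [this]; exact mem_univ _
      exact h9
    obtain ⟨t, ht, rfl⟩ : ∃ s ∈ Ico a (a + p), (s : AddCircle p) = y := by
      have := AddCircle.coe_image_Ico_eq p a
      have h9 : y ∈ QuotientAddGroup.mk '' Ico a (a + p) := by rw [this]; exact mem_univ _
      exact h9
    rw [AddCircle.liftIco_coe_apply hs, AddCircle.liftIco_coe_apply ht] at hxy
    rw [hinj hs ht hxy]
  have hemb := (hcont.isClosedEmbedding hinj').isEmbedding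
  refine ⟨range (AddCircle.liftIco p a δ), ⟨?_⟩⟩
  have e1 : Circle ≃ₜ Metric.sphere (0:ℂ) 1 := Homeomorph.refl _
  exact hemb.toHomeomorph.symm.trans ((AddCircle.homeomorphCircle hp0.ne').trans e1)

lemma L2 (hS : ∀ S : Set X, ¬ IsSimpleClosedCurve S) {γ : ℝ → X} {a c t : ℝ} (h : ArcFn γ a c)
    (ht : t ∈ Icc a c) : ¬ ArcIn {γ t}ᶜ (γ a) (γ c) := by
  rintro ⟨b, d, β, hβ, hb, hd, hm⟩
  have hcl := hβ.isCompact_image.isClosed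
  have g1 := h.sub le_rfl ht.1 ht.2
  have g2 := h.sub ht.1 ht.2 le_rfl
  have hnt : ∀ u ∈ Icc b d, β u ≠ γ t := fun u hu => hm hu
  obtain ⟨t1, ht1, ⟨u1, hu1, e1⟩, l1⟩ := last_hit g1 hcl ⟨b, ⟨le_rfl, hβ.le⟩, hb⟩
  obtain ⟨t2, ht2, ⟨u2, hu2, e2⟩, l2⟩ := first_hit g2 hcl ⟨d, ⟨hβ.le, le_rfl⟩, hd⟩
  have h1 : t1 < t := lt_of_le_of_ne ht1.2 (by rintro rfl; exact hnt _ hu1 e1)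
  have h2 : t < t2 := lt_of_le_of_ne ht2.1 (by rintro rfl; exact hnt _ hu2 e2)
  have g : ArcFn γ t1 t2 := h.sub ht1.1 (by linarith) ht2.2
  have hh : ∀ s ∈ Icc t1 t2, ∀ u ∈ Icc b d, γ s = β u → s = t1 ∨ s = t2 := by
    intro s hs u hu hsu
    rcases le_or_gt s t with h3 | h3
    · left; exact l1 s ⟨hs.1, h3⟩ ⟨u, hu, hsu.symm⟩
    · right; exact l2 s ⟨h3.le, hs.2⟩ ⟨u, hu, hsu.symm⟩
  rcases le_total u1 u2 with h3 | h3
  · have gb : ArcFn β u1 u2 := hβ.sub hu1.1 h3 hu2.2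
    obtain ⟨S, hs⟩ := scc_of_two_arcs g gb.neg (h1.trans h2) (by simp [e2]) (by simp [e1])
      (fun s hs u hu hsu => hh s hs (-u) ⟨by linarith [hu.2, hu1.1], by linarith [hu.1, hu2.2]⟩ hsu)
    exact hS S hs
  · have gb : ArcFn β u2 u1 := hβ.sub hu2.1 h3 hu1.2
    obtain ⟨S, hs⟩ := scc_of_two_arcs g gb (h1.trans h2) e2.symm e1
      (fun s hs u hu hsu => hh s hs u ⟨by linarith [hu.1, hu2.1], by linarith [hu.2, hu1.2]⟩ hsu)
    exact hS S hs

lemma arc_param {A : Set X} (hA : IsArc A) : ∃ (φ : ℝ → X) (ψ : X → ℝ), Continuous φ ∧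
    InjOn φ (Icc 0 1) ∧ ContinuousOn ψ A ∧ IsClosed A ∧
    ∀ x ∈ A, ψ x ∈ Icc (0:ℝ) 1 ∧ φ (ψ x) = x := by
  classical
  obtain ⟨e⟩ := hA
  have hψ : ∀ x (hx : x ∈ A), (if h : x ∈ A then (e ⟨x, h⟩).1 else 0) = (e ⟨x, hx⟩).1 :=
    fun x hx => dif_pos hx
  refine ⟨fun t => (e.symm (projIcc 0 1 zero_le_one t) : X),
    fun x => if h : x ∈ A then (e ⟨x, h⟩).1 else 0, ?_, ?_, ?_, ?_, ?_⟩
  · exact continuous_subtype_val.comp (e.symm.continuous.comp continuous_projIcc)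
  · intro s hs t ht hst
    have := e.symm.injective (Subtype.val_injective hst)
    rw [projIcc_of_mem _ hs, projIcc_of_mem _ ht] at this
    simpa using this
  · rw [continuousOn_iff_continuous_domRestrict]
    have : A.domRestrict (fun x => if h : x ∈ A then (e ⟨x, h⟩).1 else 0) = fun x : A => (e x).1 := by
      funext x
      exact hψ x.1 x.2
    rw [this]
    exact continuous_subtype_val.comp e.continuous
  · have : CompactSpace A := e.symm.compactSpace
    exact (isCompact_iff_compactSpace.2 this).isClosed
  · intro x hx
    simp only [hψ x hx]
    refine ⟨(e ⟨x, hx⟩).2, ?_⟩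
    simp

end

structure TL (X : Type*) [MetricSpace X] : Prop where
  conn : ∀ p q : X, IsPreconnected (seg p q)
  closed : ∀ p q : X, IsClosed (seg p q)
  antisymm : ∀ k x y : X, x ∈ seg k y → y ∈ seg k x → x = y
  lc : ∀ ε > 0, ∃ δ > 0, ∀ p q : X, dist p q < δ → seg p q ⊆ Metric.ball p ε
  anti : ∃ N : ℕ, ∀ S : Finset X, ∀ k : X, (∀ s ∈ S, ∀ s' ∈ S, s ≠ s' → s ∉ seg k s') → S.card ≤ N
  gate : ∀ K : Set X, IsClosed K → ∀ k ∈ K, ∀ z, z ∉ K →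
    ∃ b ∈ K, b ∈ seg k z ∧ ∀ w ∈ seg b z, w ∈ K → w = b

section
variable {X : Type*} [MetricSpace X]

lemma arc_sub {φ : ℝ → X} (h1 : Continuous φ) (h2 : InjOn φ (Icc 0 1)) {t t' : ℝ}
    (ht : t ∈ Icc (0:ℝ) 1) (ht' : t' ∈ Icc (0:ℝ) 1) {Z : Set X} (hZ : ∀ u ∈ uIcc t t', φ u ∈ Z) :
    ArcIn Z (φ t) (φ t') := by
  have key : ∀ t t' : ℝ, t ∈ Icc (0:ℝ) 1 → t' ∈ Icc (0:ℝ) 1 → t ≤ t' →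
      (∀ u ∈ uIcc t t', φ u ∈ Z) → ArcIn Z (φ t) (φ t') := by
    intro t t' ht ht' hle hZ
    refine ⟨t, t', φ, ⟨hle, h1.continuousOn, h2.mono (Icc_subset_Icc ht.1 ht'.2)⟩, rfl, rfl, ?_⟩
    intro u hu
    exact hZ u (by rwa [uIcc_of_le hle])
  rcases le_total t t' with h | h
  · exact key t t' ht ht' h hZ
  · exact (key t' t ht' ht h (by rwa [uIcc_comm])).symm

lemma LC0 {𝒜 : Finset (Set X)} (hA : ∀ A ∈ 𝒜, IsArc A) (hu : ⋃₀ (𝒜 : Set (Set X)) = Set.univ)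
    {Z : Set X} (hZ : IsOpen Z) {r : X} (hr : r ∈ Z) : ∀ᶠ r' in 𝓝 r, ArcIn Z r r' := by
  have key : ∀ᶠ r' in 𝓝 r, ∀ A ∈ 𝒜, r' ∈ A → ArcIn Z r r' := by
    rw [Filter.eventually_all_finset]
    intro A hAA
    obtain ⟨φ, ψ, c1, i1, c2, cA, h⟩ := arc_param (hA A hAA)
    by_cases hrA : r ∈ A
    · obtain ⟨hψ, hφ⟩ := h r hrA
      have hnb : φ ⁻¹' Z ∈ 𝓝 (ψ r) := c1.continuousAt.preimage_mem_nhds (by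
        rw [hφ]; exact hZ.mem_nhds hr)
      obtain ⟨ε, hε, hb⟩ := Metric.mem_nhds_iff.1 hnb
      have h3 : ∀ᶠ r' in 𝓝[A] r, ψ r' ∈ Metric.ball (ψ r) ε :=
        (c2 r hrA) (Metric.ball_mem_nhds _ hε)
      rw [eventually_nhdsWithin_iff] at h3
      filter_upwards [h3] with r' hr' hr'A
      obtain ⟨hψ', hφ'⟩ := h r' hr'A
      have := arc_sub c1 i1 hψ hψ' (Z := Z) (by
        intro u hu
        apply hb
        have hc : uIcc (ψ r) (ψ r') ⊆ Metric.ball (ψ r) ε := by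
          rw [← segment_eq_uIcc]
          exact (convex_ball (ψ r) ε).segment_subset (Metric.mem_ball_self hε) (hr' hr'A)
        exact hc hu)
      rwa [hφ, hφ'] at this
    · filter_upwards [cA.isOpen_compl.mem_nhds hrA] with r' hr' hr'A
      exact absurd hr'A hr'
  filter_upwards [key] with r' hr'
  obtain ⟨A, hA1, hA2⟩ : r' ∈ ⋃₀ (𝒜 : Set (Set X)) := hu ▸ mem_univ r'
  exact hr' A hA1 hA2

lemma L1 {𝒜 : Finset (Set X)} (hA : ∀ A ∈ 𝒜, IsArc A) (hu : ⋃₀ (𝒜 : Set (Set X)) = Set.univ)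
    {Z : Set X} (hZ : IsOpen Z) {R : Set X} (hR : IsPreconnected R) (hRZ : R ⊆ Z) {p q : X}
    (hp : p ∈ R) (hq : q ∈ R) : ArcIn Z p q := by
  by_contra hcon
  have memZ : ∀ {a b : X}, ArcIn Z a b → b ∈ Z := by
    rintro a b ⟨s, t, γ, h, rfl, rfl, hm⟩
    exact hm ⟨h.le, le_rfl⟩
  have o1 : IsOpen {z | ArcIn Z p z} := by
    rw [isOpen_iff_mem_nhds]
    intro z hz
    filter_upwards [LC0 hA hu hZ (memZ hz)] with r' hr'
    exact ArcIn.trans hz hr'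
  have o2 : IsOpen {z | z ∈ Z ∧ ¬ ArcIn Z p z} := by
    rw [isOpen_iff_mem_nhds]
    rintro z ⟨hz, hz'⟩
    filter_upwards [LC0 hA hu hZ hz] with r' hr'
    exact ⟨memZ hr', fun h => hz' (h.trans hr'.symm)⟩
  obtain ⟨z, -, h1, h2⟩ := hR _ _ o1 o2 (fun z hz => by
    by_cases h : ArcIn Z p z
    · exact Or.inl h
    · exact Or.inr ⟨hRZ hz, h⟩) ⟨p, hp, ArcIn.refl (hRZ hp)⟩ ⟨q, hq, hRZ hq, hcon⟩
  exact h2.2 h1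

lemma seg_sub {X : Type*} [TopologicalSpace X] {p q : X} {C : Set X} (hC : IsPreconnected C)
    (hp : p ∈ C) (hq : q ∈ C) :
    seg p q ⊆ C := sInter_subset_of_mem ⟨hC, hp, hq⟩

lemma seg_symm {X : Type*} [TopologicalSpace X] (p q : X) : seg p q = seg q p := by
  unfold seg
  congr 1
  ext C
  simp only [mem_setOf_eq]
  tauto

lemma left_mem {X : Type*} [TopologicalSpace X] (p q : X) : p ∈ seg p q := fun _ h => h.2.1
lemma right_mem {X : Type*} [TopologicalSpace X] (p q : X) : q ∈ seg p q := fun _ h => h.2.2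

theorem tl_of_tree (hX : IsTree X) : TL X := by
  obtain ⟨hc, hconn, ⟨𝒜, hA, hu, -⟩, hS⟩ := hX
  have img : ∀ {γ : ℝ → X} {a c : ℝ}, ArcFn γ a c → γ '' Icc a c = seg (γ a) (γ c) := by
    intro γ a c h
    apply Subset.antisymm
    · rintro _ ⟨t, ht, rfl⟩ C ⟨hC, h1, h2⟩
      by_contra hn
      exact L2 hS h ht (L1 hA hu isOpen_compl_singleton hC (fun z hz => by
        rintro rfl; exact hn hz) h1 h2)
    · exact seg_sub (isPreconnected_Icc.image _ h.cont) ⟨a, ⟨le_rfl, h.le⟩, rfl⟩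
        ⟨c, ⟨h.le, le_rfl⟩, rfl⟩
  have ex : ∀ p q : X, ∃ (γ : ℝ → X) (a c : ℝ), ArcFn γ a c ∧ γ a = p ∧ γ c = q := by
    intro p q
    obtain ⟨a, c, γ, h, h1, h2, -⟩ := L1 hA hu isOpen_univ isPreconnected_univ (Subset.refl _)
      (mem_univ p) (mem_univ q)
    exact ⟨γ, a, c, h, h1, h2⟩
  have hcn : ∀ p q : X, IsPreconnected (seg p q) := by
    intro p q
    obtain ⟨γ, a, c, h, rfl, rfl⟩ := ex p q
    rw [← img h]
    exact isPreconnected_Icc.image _ h.cont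
  have htri : ∀ p q r : X, seg p r ⊆ seg q p ∪ seg q r := by
    intro p q r
    exact seg_sub (IsPreconnected.union q (left_mem _ _) (left_mem _ _) (hcn _ _) (hcn _ _))
      (Or.inl (right_mem _ _)) (Or.inr (right_mem _ _))
  refine ⟨hcn, ?_, ?_, ?_, ?_, ?_⟩
  · intro p q
    obtain ⟨γ, a, c, h, rfl, rfl⟩ := ex p q
    rw [← img h]
    exact h.isCompact_image.isClosed
  · intro k x y hx hy
    obtain ⟨γ, a, c, h, rfl, rfl⟩ := ex k y
    rw [← img h] at hx
    obtain ⟨t, ht, rfl⟩ := hx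
    rw [← img (h.sub le_rfl ht.1 ht.2)] at hy
    obtain ⟨s, hs, hsc⟩ := hy
    have := h.inj ⟨hs.1, hs.2.trans ht.2⟩ ⟨h.le, le_rfl⟩ hsc
    congr 1
    linarith [hs.2, ht.2]
  · intro ε hε
    have h1 : ∀ p : X, ∃ U : Set X, IsOpen U ∧ p ∈ U ∧ ∀ r ∈ U, ArcIn (Metric.ball p (ε/2)) p r := by
      intro p
      have := LC0 hA hu (Metric.isOpen_ball (x := p) (ε := ε/2)) (Metric.mem_ball_self (by linarith))
      obtain ⟨U, h1, h2, h3⟩ := eventually_nhds_iff.1 this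
      exact ⟨U, h2, h3, h1⟩
    choose U hU hpU hr using h1
    obtain ⟨δ, hδ, hL⟩ := lebesgue_number_lemma_of_metric (isCompact_univ (X := X)) hU
      (fun p _ => mem_iUnion.2 ⟨p, hpU p⟩)
    refine ⟨δ, hδ, fun p q hpq => ?_⟩
    obtain ⟨i, hi⟩ := hL p (mem_univ _)
    have hp := hr i p (hi (Metric.mem_ball_self hδ))
    have hq := hr i q (hi (by rwa [Metric.mem_ball, dist_comm]))
    obtain ⟨a, c, γ, h, h1, h2, hm⟩ := hp.symm.trans hq
    have hp' : p ∈ Metric.ball i (ε/2) := by rw [← h1]; exact hm ⟨le_rfl, h.le⟩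
    rw [← h1, ← h2, ← img h]
    rintro _ ⟨t, ht, rfl⟩
    have h3 := hm ht
    rw [h1]
    rw [Metric.mem_ball] at *
    have := dist_triangle_right (γ t) p i
    linarith
  · refine ⟨𝒜.card * 2, fun S k hSk => ?_⟩
    by_contra hlt
    push Not at hlt
    classical
    have hex : ∀ s : X, ∃ A ∈ 𝒜, s ∈ A := fun s => by
      obtain ⟨A, hA1, hA2⟩ : s ∈ ⋃₀ (𝒜 : Set (Set X)) := hu ▸ mem_univ s
      exact ⟨A, hA1, hA2⟩
    choose F hF hsF using hex
    obtain ⟨A, hAA, hcard⟩ := Finset.exists_lt_card_fiber_of_mul_lt_card_of_maps_to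
      (f := F) (t := 𝒜) (s := S) (n := 2) (fun a _ => hF a) hlt
    obtain ⟨φ, ψ, c1, i1, c2, cA, h⟩ := arc_param (hA A hAA)
    have key : ∀ x ∈ S, ∀ y ∈ S, ∀ z ∈ S, x ∈ A → y ∈ A → z ∈ A → x ≠ y → y ≠ z →
        ψ x ≤ ψ y → ψ y ≤ ψ z → False := by
      intro x hx y hy z hz hxA hyA hzA hxy hyz h1 h2
      have harc : ArcFn φ (ψ x) (ψ z) := ⟨h1.trans h2, c1.continuousOn,
        i1.mono (Icc_subset_Icc (h x hxA).1.1 (h z hzA).1.2)⟩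
      have : y ∈ seg x z := by
        have e := img harc
        rw [(h x hxA).2, (h z hzA).2] at e
        rw [← e, ← (h y hyA).2]
        exact ⟨ψ y, ⟨h1, h2⟩, rfl⟩
      rcases htri x k z this with h3 | h3
      · exact hSk y hy x hx hxy.symm h3
      · exact hSk y hy z hz hyz h3
    obtain ⟨x, hx, y, hy, z, hz, n1, n2, n3⟩ := Finset.two_lt_card.1 hcard
    simp only [Finset.mem_filter] at hx hy hz
    have hxA : x ∈ A := hx.2 ▸ hsF x
    have hyA : y ∈ A := hy.2 ▸ hsF y
    have hzA : z ∈ A := hz.2 ▸ hsF z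
    rcases le_total (ψ x) (ψ y) with a1 | a1 <;> rcases le_total (ψ y) (ψ z) with a2 | a2 <;>
      rcases le_total (ψ x) (ψ z) with a3 | a3
    · exact key x hx.1 y hy.1 z hz.1 hxA hyA hzA n1 n3 a1 a2
    · exact key x hx.1 y hy.1 z hz.1 hxA hyA hzA n1 n3 a1 a2
    · exact key x hx.1 z hz.1 y hy.1 hxA hzA hyA n2 n3.symm a3 a2
    · exact key z hz.1 x hx.1 y hy.1 hzA hxA hyA n2.symm n1 a3 a1
    · exact key y hy.1 x hx.1 z hz.1 hyA hxA hzA n1.symm n2 a1 a3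
    · exact key y hy.1 z hz.1 x hx.1 hyA hzA hxA n3 n2.symm a2 a3
    · exact key z hz.1 y hy.1 x hx.1 hzA hyA hxA n3.symm n1.symm a2 a1
    · exact key z hz.1 y hy.1 x hx.1 hzA hyA hxA n3.symm n1.symm a2 a1
  · intro K hK k hk z hz
    obtain ⟨γ, a, c, h, rfl, rfl⟩ := ex z k
    obtain ⟨t, ht, htK, hf⟩ := first_hit h hK hk
    refine ⟨γ t, htK, ?_, ?_⟩
    · rw [seg_symm, ← img h]
      exact ⟨t, ht, rfl⟩
    · intro w hw hwK
      rw [seg_symm, ← img (h.sub le_rfl ht.1 ht.2)] at hw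
      obtain ⟨s, hs, rfl⟩ := hw
      rw [hf s hs hwK]

end

def Gt {X : Type*} [TopologicalSpace X] (K : Set X) (b z : X) : Prop :=
  b ∈ K ∧ ∀ w ∈ seg b z, w ∈ K → w = b

def SC {X : Type*} [TopologicalSpace X] (K : Set X) (c v : X) : Prop := ∀ w ∈ seg c v, w ∉ K

structure InvC {X : Type*} [TopologicalSpace X] (g : X → X) (K : Set X) : Prop where
  closed : IsClosed K
  pre : IsPreconnected K
  ne : K.Nonempty
  maps : MapsTo g K K

def Lim {X : Type*} [TopologicalSpace X] (g : X → X) (a : X) (K : Set X) : Prop :=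
  ∀ U : Set X, IsOpen U → K ⊆ U → ∀ᶠ n in atTop, g^[n] a ∈ U

section
set_option linter.unusedSectionVars false
variable {X : Type*} [MetricSpace X] [CompactSpace X]

namespace TL

lemma tri (T : TL X) (p q r : X) : seg p r ⊆ seg p q ∪ seg q r :=
  seg_sub (IsPreconnected.union q (right_mem _ _) (left_mem _ _) (T.conn _ _) (T.conn _ _))
      (Or.inl (left_mem _ _)) (Or.inr (right_mem _ _))

lemma sub2 (T : TL X) {p q x y : X} (hx : x ∈ seg p q) (hy : y ∈ seg p q) : seg x y ⊆ seg p q :=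
  seg_sub (T.conn _ _) hx hy

lemma subl (T : TL X) {p q x : X} (hx : x ∈ seg p q) : seg p x ⊆ seg p q :=
  T.sub2 (left_mem _ _) hx

lemma subr (T : TL X) {p q x : X} (hx : x ∈ seg p q) : seg x q ⊆ seg p q :=
  T.sub2 hx (right_mem _ _)

lemma antisymm' (T : TL X) {k x y : X} (hx : x ∈ seg y k) (hy : y ∈ seg x k) : x = y :=
  T.antisymm k x y (by rwa [seg_symm]) (by rwa [seg_symm])

lemma seg_self (T : TL X) {p x : X} (h : x ∈ seg p p) : x = p :=
  T.antisymm p x p h (left_mem _ _)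

lemma mid (T : TL X) {p q x v : X} (hx : x ∈ seg p q) (h1 : v ∈ seg p x) (h2 : v ∈ seg x q) :
    v = x := by
  rcases T.tri p v q hx with h | h
  · exact T.antisymm p v x h1 h
  · exact T.antisymm' h2 h

lemma between (T : TL X) {p q x v : X} (hx : x ∈ seg p q) (h1 : v ∈ seg p x) : x ∈ seg v q := by
  rcases T.tri p v q hx with h | h
  · rw [T.antisymm p v x h1 h]
    exact left_mem _ _
  · exact h

lemma cmp (T : TL X) {p q x y : X} (hx : x ∈ seg p q) (hy : y ∈ seg p q) :
    x ∈ seg p y ∨ y ∈ seg p x := by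
  rcases T.tri p x q hy with h | h
  · exact Or.inr h
  · rcases T.tri p y q hx with h' | h'
    · exact Or.inl h'
    · rw [T.antisymm' h' h]
      exact Or.inl (right_mem _ _)

lemma preconn_of (T : TL X) {S : Set X} (h : ∀ p ∈ S, ∀ q ∈ S, seg p q ⊆ S) :
    IsPreconnected S := by
  rcases S.eq_empty_or_nonempty with rfl | ⟨p, hp⟩
  · exact isPreconnected_empty
  · exact isPreconnected_of_forall p fun q hq =>
      ⟨seg p q, h p hp q hq, left_mem _ _, right_mem _ _, T.conn _ _⟩

lemma near (T : TL X) {b w : X} (h : b ≠ w) {ε : ℝ} (hε : 0 < ε) :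
    ∃ x ∈ seg b w, x ≠ b ∧ x ≠ w ∧ seg b x ⊆ Metric.ball b ε := by
  obtain ⟨δ, hδ, hl⟩ := T.lc ε hε
  have hp := IsPreconnected.preperfect_of_nontrivial
    (⟨b, left_mem _ _, w, right_mem _ _, h⟩ : (seg b w).Nontrivial) (T.conn b w) b (left_mem _ _)
  rw [accPt_iff_nhds] at hp
  obtain ⟨y, ⟨hy1, hy2⟩, hy3⟩ := hp (Metric.ball b (min δ (dist b w)))
    (Metric.ball_mem_nhds _ (lt_min hδ (dist_pos.2 h)))
  rw [Metric.mem_ball, lt_min_iff] at hy1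
  refine ⟨y, hy2, hy3, ?_, hl b y (by rw [dist_comm]; exact hy1.1)⟩
  rintro rfl
  rw [dist_comm] at hy1
  exact lt_irrefl _ hy1.2

lemma gate_ex (T : TL X) {K : Set X} (hK : IsClosed K) (hn : K.Nonempty) {z : X} (hz : z ∉ K) :
    ∃ b, Gt K b z := by
  obtain ⟨k, hk⟩ := hn
  obtain ⟨b, hb, -, h⟩ := T.gate K hK k hk z hz
  exact ⟨b, hb, h⟩

lemma gate_mem (T : TL X) {K : Set X} {b z k : X} (h : Gt K b z) (hp : IsPreconnected K)
    (hk : k ∈ K) : b ∈ seg k z := by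
  by_cases hbz : b = z
  · rw [hbz]; exact right_mem _ _
  · rw [← (T.closed k z).closure_eq, Metric.mem_closure_iff]
    intro ε hε
    obtain ⟨x, hx, hxb, -, hx2⟩ := T.near hbz hε
    refine ⟨x, ?_, by rw [dist_comm]; exact hx2 (right_mem _ _)⟩
    rcases T.tri b k z hx with h1 | h1
    · exact absurd (h.2 x hx (seg_sub hp h.1 hk h1)) hxb
    · exact h1

lemma gate_unique (T : TL X) {K : Set X} {b b' z : X} (h : Gt K b z) (h' : Gt K b' z)
    (hp : IsPreconnected K) : b = b' := h'.2 _ (T.gate_mem h hp h'.1) h.1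

lemma gate_sub (T : TL X) {K : Set X} {b z v : X} (h : Gt K b z) (hv : v ∈ seg b z) : Gt K b v :=
  ⟨h.1, fun w hw => h.2 w (T.subl hv hw)⟩

lemma gate_not_mem (T : TL X) {K : Set X} {b z v : X} (h : Gt K b z) (hv : v ∈ seg b z)
    (hb : v ≠ b) : v ∉ K := fun hk => hb (h.2 v hv hk)

lemma sc_symm {K : Set X} {c v : X} (h : SC K c v) : SC K v c := by
  unfold SC
  rwa [seg_symm]

lemma sc_trans (T : TL X) {K : Set X} {c v w : X} (h : SC K c v) (h' : SC K v w) : SC K c w :=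
  fun x hx => (T.tri c v w hx).elim (h x) (h' x)

lemma sc_open (T : TL X) {K : Set X} (hK : IsClosed K) (c : X) : IsOpen {v | SC K c v} := by
  rw [Metric.isOpen_iff]
  intro v hv
  have : Kᶜ ∈ 𝓝 v := hK.isOpen_compl.mem_nhds (hv v (right_mem _ _))
  obtain ⟨ε, hε, hb⟩ := Metric.mem_nhds_iff.1 this
  obtain ⟨δ, hδ, hl⟩ := T.lc ε hε
  refine ⟨δ, hδ, fun w hw => T.sc_trans hv fun x hx => hb (hl v w ?_ hx)⟩
  rw [dist_comm]; exact hw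

lemma sc_gate (T : TL X) {K : Set X} {b z v : X} (h : Gt K b z) (h' : SC K z v) : Gt K b v :=
  ⟨h.1, fun w hw hk => (T.tri b z v hw).elim (fun h1 => h.2 w h1 hk) (fun h1 => absurd hk (h' w h1))⟩

lemma sc_of_seg (T : TL X) {K : Set X} {b z v : X} (h : Gt K b z) (hv : v ∈ seg b z)
    (hb : v ≠ b) : SC K v z := by
  intro w hw hk
  have := h.2 w (T.subr hv hw) hk
  subst this
  exact hb (T.antisymm' hv hw)

lemma sep (T : TL X) {K : Set X} (hp : IsPreconnected K) {s s' k k' : X} (hs : s ∉ K) (hk : k ∈ K)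
    (hk' : k' ∈ K) (h : k' ∈ seg s s') : s ∉ seg k s' := by
  intro h1
  rcases T.tri k k' s' h1 with h2 | h2
  · exact hs (seg_sub hp hk hk' h2)
  · have := T.antisymm' h h2
    exact hs (this ▸ hk')

lemma vopen (T : TL X) (b v : X) : IsOpen {z | v ∉ seg b z} := by
  rw [Metric.isOpen_iff]
  intro z hz
  have hzv : z ≠ v := by rintro rfl; exact hz (right_mem _ _)
  obtain ⟨δ, hδ, hl⟩ := T.lc _ (dist_pos.2 hzv)
  refine ⟨δ, hδ, fun w hw h => ?_⟩
  rcases T.tri b z w h with h1 | h1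
  · exact hz h1
  · have := hl z w (by rw [dist_comm]; exact hw) h1
    rw [Metric.mem_ball, dist_comm] at this
    exact lt_irrefl _ this

lemma beyopen (T : TL X) (b v : X) : IsOpen {z | v ∈ seg b z ∧ z ≠ v} := by
  rw [Metric.isOpen_iff]
  rintro z ⟨hz, hzv⟩
  obtain ⟨δ, hδ, hl⟩ := T.lc _ (dist_pos.2 hzv)
  refine ⟨δ, hδ, fun w hw => ?_⟩
  have hn : v ∉ seg z w := by
    intro h1
    have := hl z w (by rw [dist_comm]; exact hw) h1
    rw [Metric.mem_ball, dist_comm] at this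
    exact lt_irrefl _ this
  refine ⟨?_, fun h => hn (h ▸ right_mem _ _)⟩
  rcases T.tri b w z hz with h1 | h1
  · exact h1
  · rw [seg_symm] at h1; exact absurd h1 hn

lemma cross (T : TL X) {R : Set X} (hR : IsPreconnected R) {b v z z' : X} (hz : z ∈ R)
    (hz' : z' ∈ R) (h : v ∈ seg b z) (h' : v ∉ seg b z') : v ∈ R :=
  (T.tri b z' z h).elim (fun h1 => absurd h1 h') (fun h1 => seg_sub hR hz' hz h1)

lemma clos (T : TL X) {R : Set X} (hR : IsPreconnected R) {k p v : X} (hk : k ∈ R)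
    (hp : p ∈ closure R) (hv : v ∈ seg k p) (hvp : v ≠ p) : v ∈ R := by
  obtain ⟨r, hr, hrR⟩ := mem_closure_iff.1 hp _ (T.beyopen k v) ⟨hv, hvp.symm⟩
  exact seg_sub hR hk hrR hr.1

lemma small (T : TL X) {b s : X} (h : s ≠ b) : ∀ᶠ x in 𝓝 b, s ∉ seg b x :=
  (T.vopen b s).mem_nhds fun h1 => h (T.seg_self h1)

lemma lin (T : TL X) {x : ℕ → X} {b : X} (hx : Tendsto x atTop (𝓝 b)) (hne : ∀ j, x j ≠ b) :
    ∃ j0, ∃ᶠ j in atTop, x j ∈ seg b (x j0) := by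
  by_contra hcon
  push Not at hcon
  classical
  obtain ⟨N, hN⟩ := T.anti
  have key : ∀ n : ℕ, ∃ S : Finset X, S.card = n ∧ (∀ s ∈ S, ∃ j, s = x j) ∧
      ∀ s ∈ S, ∀ s' ∈ S, s ≠ s' → s ∉ seg b s' := by
    intro n
    induction n with
    | zero => exact ⟨∅, by simp⟩
    | succ n ih =>
      obtain ⟨S, hS, hr, ha⟩ := ih
      have e1 : ∀ᶠ j in atTop, ∀ s ∈ S, x j ∉ seg b s := by
        rw [Filter.eventually_all_finset]
        intro s hs
        obtain ⟨j, rfl⟩ := hr s hs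
        exact hcon j
      have e2 : ∀ᶠ j in atTop, ∀ s ∈ S, s ∉ seg b (x j) := by
        rw [Filter.eventually_all_finset]
        intro s hs
        obtain ⟨j, rfl⟩ := hr s hs
        exact hx.eventually (T.small (hne j))
      obtain ⟨j, h1, h2⟩ := (e1.and e2).exists
      refine ⟨insert (x j) S, ?_, ?_, ?_⟩
      · rw [Finset.card_insert_of_notMem, hS]
        intro hm
        exact h1 _ hm (right_mem _ _)
      · intro s hs
        rcases Finset.mem_insert.1 hs with rfl | hs
        · exact ⟨j, rfl⟩
        · exact hr s hs
      · intro s hs s' hs' hne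
        rcases Finset.mem_insert.1 hs with rfl | hs <;> rcases Finset.mem_insert.1 hs' with rfl | hs'
        · exact absurd rfl hne
        · exact h1 s' hs'
        · exact h2 s hs
        · exact ha s hs s' hs' hne
  obtain ⟨S, hS, -, ha⟩ := key (N + 1)
  have := hN S b ha
  omega

end TL

lemma InvC.iter {g : X → X} {K : Set X} (h : InvC g K) (n : ℕ) : MapsTo g^[n] K K := h.maps.iterate n

theorem HL (T : TL X) {g : X → X} (hg : Continuous g) {K : Set X} {b a x x' : X} {P P' : ℕ}
    (hK : InvC g K) (hb : Gt K b a) (hl : Lim g a K) (hx : x ∈ seg b a) (hxa : x ≠ a)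
    (hxb : x ≠ b) (hx' : x' ∈ seg b x) (hxx' : x' ≠ x) (hxb' : x' ≠ b) (hP : g^[P] x = a)
    (hP' : g^[P'] x' = a) : Horseshoe g := by
  have hP0 : 1 ≤ P := by
    rcases P with _ | P
    · exact absurd hP hxa
    · omega
  have hKV : ∀ v ∈ seg b a, v ≠ b → K ⊆ {z | v ∉ seg b z} := fun v hv hvb z hz h =>
    T.gate_not_mem hb hv hvb (seg_sub hK.pre hb.1 hz h)
  have tend : ∀ m : ℕ, 1 ≤ m → Tendsto (fun i => m * i) atTop atTop := fun m hm =>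
    tendsto_id.const_mul_atTop' hm
  have hex : ∃ i, x ∉ seg b (g^[P * i] a) :=
    ((tend P hP0).eventually (hl _ (T.vopen b x) (hKV x hx hxb))).exists
  classical
  obtain ⟨i, hi, hmin⟩ : ∃ i, x ∉ seg b (g^[P * i] a) ∧ ∀ k < i, x ∈ seg b (g^[P * k] a) :=
    ⟨Nat.find hex, Nat.find_spec hex, fun k hk => not_not.1 (Nat.find_min hex hk)⟩
  obtain ⟨i, rfl⟩ : ∃ i', i = i' + 1 := by
    rcases i with _ | i
    · exact absurd hx hi
    · exact ⟨i, rfl⟩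
  have pre : ∀ n, ∀ p q, IsPreconnected (g^[n] '' seg p q) := fun n p q =>
    (T.conn p q).image _ (hg.iterate n).continuousOn
  set m := P * (i + 1 + 1) with hm
  have hm1 : 1 ≤ m := by rw [hm]; nlinarith
  have hcov : seg x a ⊆ g^[m] '' seg x a := by
    have h1 : x ∈ g^[P * (i + 1)] '' seg x a := by
      apply T.cross (pre _ _ _) (z := g^[P * i] a) (z' := g^[P * (i + 1)] a) _ _ (hmin i (by omega)) hi
      · refine ⟨x, left_mem _ _, ?_⟩
        have : P * (i + 1) = P * i + P := by ring
        rw [this, iterate_add_apply, hP]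
      · exact ⟨a, right_mem _ _, rfl⟩
    obtain ⟨q, hq, hqx⟩ := h1
    have ha : a ∈ g^[m] '' seg x a := by
      refine ⟨q, hq, ?_⟩
      have : m = P + P * (i + 1) := by rw [hm]; ring
      rw [this, iterate_add_apply, hqx, hP]
    have hai : g^[P * (i + 1)] a ∈ g^[m] '' seg x a := by
      refine ⟨x, left_mem _ _, ?_⟩
      have : m = P * (i + 1) + P := by rw [hm]; ring
      rw [this, iterate_add_apply, hP]
    exact seg_sub (pre _ _ _) (T.cross (pre _ _ _) ha hai hx hi) ha
  have hx'a : x' ∈ seg b a := T.subl hx hx'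
  obtain ⟨ε, hε, hball⟩ : ∃ ε > 0, Metric.ball b ε ⊆ g^[P'] ⁻¹' {z | x ∉ seg b z} := by
    apply Metric.mem_nhds_iff.1
    apply (hg.iterate P').continuousAt.preimage_mem_nhds
    exact (T.vopen b x).mem_nhds (hKV x hx hxb (hK.iter P' hb.1))
  obtain ⟨x2, hx2, h2b, -, h2ball⟩ := T.near hxb'.symm hε
  have hx2a : x2 ∈ seg b a := T.subl hx'a hx2
  have hxx : x' ∈ seg x2 x := T.between hx' hx2
  have hB : seg x a ⊆ g^[P'] '' seg x2 x' := by
    have ha : a ∈ g^[P'] '' seg x2 x' := ⟨x', right_mem _ _, hP'⟩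
    have h2 : g^[P'] x2 ∈ g^[P'] '' seg x2 x' := ⟨x2, left_mem _ _, rfl⟩
    exact seg_sub (pre _ _ _) (T.cross (pre _ _ _) ha h2 hx (hball (h2ball (right_mem _ _)))) ha
  obtain ⟨k, hk⟩ : ∃ k, x2 ∉ seg b (g^[m * (k + 1)] a) := by
    have := ((tend m hm1).comp (tendsto_add_atTop_nat 1)).eventually
      (hl _ (T.vopen b x2) (hKV x2 hx2a h2b))
    exact this.exists
  set n₁ := m * (k + 1) with hn₁
  have hn1 : 1 ≤ n₁ := by rw [hn₁]; nlinarith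
  have hQ : seg x a ⊆ g^[n₁] '' seg x a := cover_iter (Subset.refl _) hcov k
  have hQB : seg x a ∪ seg x2 x' ⊆ g^[n₁] '' seg x a := by
    apply union_subset hQ
    have h1 : x ∈ g^[n₁] '' seg x a := hQ (left_mem _ _)
    have h2 : x2 ∈ g^[n₁] '' seg x a :=
      T.cross (pre _ _ _) h1 ⟨a, right_mem _ _, rfl⟩ (T.subl hx' hx2) hk
    exact (T.subl hxx).trans (seg_sub (pre _ _ _) h2 h1)
  refine ⟨seg x a, seg x2 x', (T.closed _ _).isCompact, (T.closed _ _).isCompact,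
    ⟨x, left_mem _ _⟩, ⟨x2, left_mem _ _⟩, ?_, n₁, n₁ + P', hn1, by omega, hQB, ?_⟩
  · rw [Set.disjoint_left]
    intro w h1 h2
    have h3 : w ∈ seg b x' := T.subr hx2 h2
    have h4 : w = x := T.mid hx (T.subl hx' h3) h1
    subst h4
    exact hxx' (T.antisymm b _ _ hx' h3)
  · intro z hz
    obtain ⟨w, hw, rfl⟩ := hQB hz
    obtain ⟨v, hv, rfl⟩ := hB hw
    exact ⟨v, hv, by rw [iterate_add_apply]⟩

end

inductive ReachIn {X : Type*} [MetricSpace X] (g : X → X) (Y K : Set X) (ε : ℝ) : X → Prop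
  | base {k : X} : k ∈ K → ReachIn g Y K ε k
  | step {p q : X} : ReachIn g Y K ε p → q ∈ Y → dist (g p) q < ε → ReachIn g Y K ε q

def NT {X : Type*} [MetricSpace X] (g : X → X) (Y K : Set X) : Prop :=
  ∀ z ∈ Y, ∀ ε > 0, ReachIn g Y K ε z

def Fw {X : Type*} (g : X → X) (T : Set X) : Set X := ⋃ n : ℕ, g^[n] '' T

def Gen {X : Type*} [TopologicalSpace X] (g : X → X) (T : Set X) : Set X := closure (Fw g T)

def Germ {X : Type*} [MetricSpace X] (K : Set X) (b d : X) (j : ℕ) : Set X :=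
  K ∪ {v | v ∈ seg b d ∧ seg b v ⊆ Metric.closedBall b (1 / ((j : ℝ) + 1))}

section
set_option linter.unusedSectionVars false
set_option linter.unusedVariables false
variable {X : Type*} [MetricSpace X] [CompactSpace X]

lemma ReachIn.mono {g : X → X} {Y K Y' K' : Set X} {ε ε' : ℝ} (hY : Y ⊆ Y') (hK : K ⊆ K')
    (hε : ε ≤ ε') {z : X} (h : ReachIn g Y K ε z) : ReachIn g Y' K' ε' z := by
  induction h with
  | base h => exact .base (hK h)
  | step _ hq hd ih => exact .step ih (hY hq) (hd.trans_le hε)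

lemma NT.mono {g : X → X} {Y K K' : Set X} (h : NT g Y K) (hK : K ⊆ K') : NT g Y K' :=
  fun z hz ε hε => (h z hz ε hε).mono (Subset.refl _) hK le_rfl

lemma mem_Fw {g : X → X} {T : Set X} {z : X} : z ∈ Fw g T ↔ ∃ n, ∃ t ∈ T, g^[n] t = z := by
  simp [Fw]

lemma sub_Fw {g : X → X} {T : Set X} : T ⊆ Fw g T := fun t ht => mem_Fw.2 ⟨0, t, ht, rfl⟩

lemma sub_Gen {g : X → X} {T : Set X} : T ⊆ Gen g T := sub_Fw.trans subset_closure

lemma Fw_maps {g : X → X} {T : Set X} : MapsTo g (Fw g T) (Fw g T) := by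
  intro z hz
  obtain ⟨n, t, ht, rfl⟩ := mem_Fw.1 hz
  exact mem_Fw.2 ⟨n + 1, t, ht, iterate_succ_apply' _ _ _⟩

lemma Fw_mono {g : X → X} {T T' : Set X} (h : T ⊆ T') : Fw g T ⊆ Fw g T' := by
  intro z hz
  obtain ⟨n, t, ht, rfl⟩ := mem_Fw.1 hz
  exact mem_Fw.2 ⟨n, t, h ht, rfl⟩

lemma Gen_mono {g : X → X} {T T' : Set X} (h : T ⊆ T') : Gen g T ⊆ Gen g T' :=
  closure_mono (Fw_mono h)

lemma Gen_sub {g : X → X} {T Y : Set X} (hY : InvC g Y) (h : T ⊆ Y) : Gen g T ⊆ Y := by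
  apply closure_minimal _ hY.closed
  intro z hz
  obtain ⟨n, t, ht, rfl⟩ := mem_Fw.1 hz
  exact hY.iter n (h ht)

lemma Fw_pre {g : X → X} (hg : Continuous g) {K T : Set X} (hK : InvC g K) (hT : IsPreconnected T)
    (hKT : K ⊆ T) : IsPreconnected (Fw g T) := by
  obtain ⟨k, hk⟩ := hK.ne
  apply isPreconnected_of_forall k
  intro y hy
  obtain ⟨n, t, ht, rfl⟩ := mem_Fw.1 hy
  refine ⟨T ∪ g^[n] '' T, ?_, Or.inl (hKT hk), Or.inr ⟨t, ht, rfl⟩, ?_⟩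
  · apply union_subset sub_Fw
    rintro _ ⟨t, ht, rfl⟩
    exact mem_Fw.2 ⟨n, t, ht, rfl⟩
  · exact IsPreconnected.union (g^[n] k) (hKT (hK.iter n hk)) ⟨k, hKT hk, rfl⟩ hT
      (hT.image _ (hg.iterate n).continuousOn)

lemma Gen_inv {g : X → X} (hg : Continuous g) {K T : Set X} (hK : InvC g K) (hT : IsPreconnected T)
    (hKT : K ⊆ T) : InvC g (Gen g T) :=
  ⟨isClosed_closure, (Fw_pre hg hK hT hKT).closure, hK.ne.mono (hKT.trans sub_Gen),
    Fw_maps.closure hg⟩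

structure HT (g : X → X) (Y K : Set X) (T : ℕ → Set X) : Prop where
  anti : Antitone T
  pre : ∀ j, IsPreconnected (T j)
  sub : ∀ j, K ⊆ T j
  le : ∀ j, T j ⊆ Y
  thin : ∀ η > 0, ∃ j, ∀ t ∈ T j, ∃ k ∈ K, dist t k < η

section
variable {g : X → X} {Y K : Set X} {T : ℕ → Set X}

lemma HT.H_open (h : HT g Y K T) {U : Set X} (hU : IsOpen U) (hH : (⋂ j, Gen g (T j)) ⊆ U) :
    ∃ j, Gen g (T j) ⊆ U := by
  have hd : Directed (fun x1 x2 => x1 ⊇ x2) fun j => Gen g (T j) :=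
    fun i j => ⟨max i j, Gen_mono (h.anti (le_max_left _ _)), Gen_mono (h.anti (le_max_right _ _))⟩
  exact exists_subset_nhds_of_isCompact' hd (fun j => isClosed_closure.isCompact)
    (fun j => isClosed_closure) (fun x hx => hU.mem_nhds (hH hx))

lemma HT.H_inv (hT : TL X) (hg : Continuous g) (hK : InvC g K) (h : HT g Y K T) :
    InvC g (⋂ j, Gen g (T j)) := by
  have hj := fun j => Gen_inv hg hK (h.pre j) (h.sub j)
  refine ⟨isClosed_iInter fun j => (hj j).closed, ?_, ?_, ?_⟩
  · apply hT.preconn_of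
    intro p hp q hq
    rw [mem_iInter] at hp hq
    exact subset_iInter fun j => seg_sub (hj j).pre (hp j) (hq j)
  · exact hK.ne.mono (subset_iInter fun j => (h.sub j).trans sub_Gen)
  · intro z hz
    rw [mem_iInter] at hz ⊢
    exact fun j => (hj j).maps (hz j)

lemma HT.K_sub (h : HT g Y K T) : K ⊆ ⋂ j, Gen g (T j) :=
  subset_iInter fun j => (h.sub j).trans sub_Gen

lemma HT.H_sub (hY : InvC g Y) (h : HT g Y K T) : (⋂ j, Gen g (T j)) ⊆ Y :=
  (iInter_subset _ 0).trans (Gen_sub hY (h.le 0))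

lemma dist_pos_of_closed {K : Set X} (hK : IsClosed K) {z : X} (hz : z ∉ K) :
    ∃ r > 0, ∀ k ∈ K, r ≤ dist z k := by
  obtain ⟨r, hr, hb⟩ := Metric.mem_nhds_iff.1 (hK.isOpen_compl.mem_nhds hz)
  refine ⟨r, hr, fun k hk => ?_⟩
  by_contra hlt
  push Not at hlt
  exact hb (by rwa [Metric.mem_ball, dist_comm]) hk

lemma unif (hg : Continuous g) {ε : ℝ} (hε : 0 < ε) :
    ∃ δ > 0, ∀ p q, dist p q < δ → dist (g p) (g q) < ε := by
  have := CompactSpace.uniformContinuous_of_continuous hg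
  obtain ⟨δ, hδ, h⟩ := Metric.uniformContinuous_iff.1 this ε hε
  exact ⟨δ, hδ, fun p q hpq => h hpq⟩

lemma HT.H_near (h : HT g Y K T) {η : ℝ} (hη : 0 < η) :
    ∃ j, (∀ z ∈ Gen g (T j), ∃ p ∈ ⋂ j, Gen g (T j), dist z p < η) ∧
      ∀ t ∈ T j, ∃ k ∈ K, dist t k < η := by
  obtain ⟨j1, h1⟩ := h.H_open (Metric.isOpen_thickening (δ := η) (E := ⋂ j, Gen g (T j)))
    (Metric.self_subset_thickening hη _)
  obtain ⟨j2, h2⟩ := h.thin η hη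
  refine ⟨max j1 j2, fun z hz => ?_, fun t ht => h2 t (h.anti (le_max_right _ _) ht)⟩
  exact Metric.mem_thickening_iff.1 (h1 (Gen_mono (h.anti (le_max_left _ _)) hz))

lemma HT.H_NT (hg : Continuous g) (hK : InvC g K) (h : HT g Y K T) :
    NT g (⋂ j, Gen g (T j)) K := by
  intro z hz ε hε
  by_cases hzK : z ∈ K
  · exact .base hzK
  obtain ⟨r, hr, hrK⟩ := dist_pos_of_closed hK.closed hzK
  obtain ⟨δ, hδ, hu⟩ := unif hg (half_pos hε)
  set η := min δ (min (ε / 2) (r / 2)) with hη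
  have hη0 : 0 < η := lt_min hδ (lt_min (by linarith) (by linarith))
  have hη1 : η ≤ δ := min_le_left _ _
  have hη2 : η ≤ ε / 2 := (min_le_right _ _).trans (min_le_left _ _)
  have hη3 : η ≤ r / 2 := (min_le_right _ _).trans (min_le_right _ _)
  obtain ⟨j, h1, h2⟩ := h.H_near hη0
  obtain ⟨w, hw, hwz⟩ := Metric.mem_closure_iff.1 (mem_iInter.1 hz j) η hη0
  obtain ⟨n, t, ht, rfl⟩ := mem_Fw.1 hw
  have key : ∀ i, ∃ p ∈ ⋂ j, Gen g (T j), dist (g^[i] t) p < η ∧ ReachIn g (⋂ j, Gen g (T j)) K ε p := by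
    intro i
    induction i with
    | zero =>
      obtain ⟨k, hk, hd⟩ := h2 t ht
      exact ⟨k, h.K_sub hk, hd, .base hk⟩
    | succ i ih =>
      obtain ⟨p, hp, hd, hr⟩ := ih
      obtain ⟨q, hq, hd'⟩ := h1 (g^[i+1] t) (subset_closure (mem_Fw.2 ⟨i+1, t, ht, rfl⟩))
      refine ⟨q, hq, hd', .step hr hq ?_⟩
      have h3 := hu _ _ (hd.trans_le hη1)
      rw [iterate_succ_apply'] at hd'
      have := dist_triangle_left (g p) q (g (g^[i] t))
      linarith
  rcases n with _ | n
  · obtain ⟨k, hk, hd⟩ := h2 t ht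
    have := hrK k hk
    have h4 := dist_triangle z t k
    simp only [iterate_zero, id] at hwz
    linarith
  · obtain ⟨p, hp, hd, hr⟩ := key n
    refine .step hr hz ?_
    have h3 := hu _ _ (hd.trans_le hη1)
    rw [iterate_succ_apply', dist_comm] at hwz
    have := dist_triangle_left (g p) z (g (g^[n] t))
    linarith

lemma HT.H_pre (hg : Continuous g) (hK : InvC g K) (h : HT g Y K T) {z : X}
    (hz : z ∈ ⋂ j, Gen g (T j)) (hzK : z ∉ K) : ∃ w ∈ ⋂ j, Gen g (T j), g w = z := by
  by_contra hcon
  push Not at hcon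
  have hcl : IsClosed (g '' ⋂ j, Gen g (T j)) :=
    ((isClosed_iInter fun j => isClosed_closure).isCompact.image hg).isClosed
  obtain ⟨r, hr, hrK⟩ := dist_pos_of_closed hK.closed hzK
  obtain ⟨r', hr', hrH⟩ := dist_pos_of_closed hcl (z := z) (by rintro ⟨w, hw, h⟩; exact hcon w hw h)
  set η := min (r / 2) (r' / 2) with hη
  have hη0 : 0 < η := lt_min (by linarith) (by linarith)
  have hη2 : η ≤ r / 2 := min_le_left _ _
  have hη3 : η ≤ r' / 2 := min_le_right _ _
  have hU : IsOpen (g ⁻¹' (Metric.closedBall z η)ᶜ) :=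
    Metric.isClosed_closedBall.isOpen_compl.preimage hg
  obtain ⟨j1, h1⟩ := h.H_open hU (by
    intro w hw hwb
    have := hrH (g w) ⟨w, hw, rfl⟩
    rw [Metric.mem_closedBall, dist_comm] at hwb
    linarith)
  obtain ⟨j2, h2⟩ := h.thin η hη0
  obtain ⟨w, hw, hwz⟩ := Metric.mem_closure_iff.1 (mem_iInter.1 hz (max j1 j2)) η hη0
  obtain ⟨n, t, ht, rfl⟩ := mem_Fw.1 hw
  rcases n with _ | n
  · obtain ⟨k, hk, hd⟩ := h2 t (h.anti (le_max_right _ _) ht)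
    have := hrK k hk
    have h4 := dist_triangle z t k
    simp only [iterate_zero, id] at hwz
    linarith
  · have : g^[n] t ∈ Gen g (T j1) :=
      Gen_mono (h.anti (le_max_left _ _)) (subset_closure (mem_Fw.2 ⟨n, t, ht, rfl⟩))
    apply h1 this
    rw [iterate_succ_apply', dist_comm] at hwz
    exact hwz.le

end

lemma germ_pre (T : TL X) {K : Set X} (hK : IsPreconnected K) {b d : X} (hb : b ∈ K) (j : ℕ) :
    IsPreconnected (Germ K b d j) := by
  refine IsPreconnected.union b hb ⟨left_mem _ _, ?_⟩ hK ?_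
  · intro w hw
    rw [T.seg_self hw]
    exact Metric.mem_closedBall_self (by positivity)
  · apply isPreconnected_of_forall b
    rintro v ⟨hv, hv2⟩
    exact ⟨seg b v, fun w hw => ⟨T.subl hv hw, (T.subl hw).trans hv2⟩, left_mem _ _, right_mem _ _,
      T.conn _ _⟩

lemma germ_HT (T : TL X) {g : X → X} {Y K : Set X} (hK : InvC g K) (hY : InvC g Y) (hKY : K ⊆ Y)
    {b d : X} (hb : b ∈ K) (hd : d ∈ Y) : HT g Y K (Germ K b d) := by
  refine ⟨?_, germ_pre T hK.pre hb, fun j => subset_union_left, ?_, ?_⟩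
  · intro i j hij
    apply union_subset_union_right
    rintro v ⟨hv, hv2⟩
    refine ⟨hv, hv2.trans (Metric.closedBall_subset_closedBall ?_)⟩
    have : (i : ℝ) ≤ j := by exact_mod_cast hij
    apply one_div_le_one_div_of_le <;> [positivity; linarith]
  · intro j
    apply union_subset hKY
    rintro v ⟨hv, -⟩
    exact seg_sub hY.pre (hKY hb) hd hv
  · intro η hη
    obtain ⟨j, hj⟩ := exists_nat_one_div_lt hη
    refine ⟨j, ?_⟩
    rintro t (ht | ⟨ht, ht2⟩)
    · exact ⟨t, ht, by simpa using hη⟩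
    · exact ⟨b, hb, (ht2 (right_mem _ _)).trans_lt hj⟩

lemma trap_seq {g : X → X} (hg : Continuous g) (m : ℕ) : ∀ θ > 0, ∃ ε > 0, ∃ t : ℕ → ℝ, ε ≤ t 0 ∧
    (∀ i ≤ m, t i ≤ θ) ∧ ∀ i < m, ∀ p x, dist p x < t i → ∀ q, dist (g p) q < ε →
      dist q (g x) < t (i + 1) := by
  induction m with
  | zero =>
    intro θ hθ
    exact ⟨θ, hθ, fun _ => θ, le_rfl, fun _ _ => le_rfl, fun i hi => absurd hi (by omega)⟩
  | succ m ih =>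
    intro θ hθ
    obtain ⟨ε, hε, t, h1, h2, h3⟩ := ih θ hθ
    have ht0 : 0 < t 0 := hε.trans_le h1
    obtain ⟨δ, hδ, hu⟩ := unif hg (half_pos ht0)
    refine ⟨min (min δ θ) (min ε (t 0 / 2)), by positivity,
      fun i => Nat.casesOn i (min δ θ) t, min_le_left _ _, ?_, ?_⟩
    · intro i hi
      rcases i with _ | i
      · exact min_le_right _ _
      · exact h2 i (by omega)
    · intro i hi p x hpx q hq
      rw [lt_min_iff, lt_min_iff, lt_min_iff] at hq
      rcases i with _ | i
      · have h4 := hu p x (hpx.trans_le (min_le_left _ _))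
        have := dist_triangle_left q (g x) (g p)
        show dist q (g x) < t 0
        linarith
      · exact h3 i (by omega) p x hpx q hq.2.1

theorem trap {g : X → X} (hg : Continuous g) {Y K : Set X} (hK : InvC g K) (hKY : K ⊆ Y)
    (hNT : NT g Y K) {z : X} (hzY : z ∈ Y) (hzK : z ∉ K)
    (h : ∀ x ∈ K, ∃ i, K ∈ 𝓝[Y] (g^[i] x)) : False := by
  obtain ⟨m, ρ, hρ, hm⟩ : ∃ (m : ℕ) (ρ : ℝ), 0 < ρ ∧ ∀ x ∈ K, ∃ i ≤ m, ∀ w ∈ Y,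
      dist w (g^[i] x) < ρ → w ∈ K := by
    refine IsCompact.induction_on (p := fun S => ∃ (m : ℕ) (ρ : ℝ), 0 < ρ ∧ ∀ x ∈ S, ∃ i ≤ m, ∀ w ∈ Y,
      dist w (g^[i] x) < ρ → w ∈ K) hK.closed.isCompact ⟨0, 1, one_pos, by simp⟩ ?_ ?_ ?_
    · rintro S S' hS ⟨m, ρ, hρ, h⟩
      exact ⟨m, ρ, hρ, fun x hx => h x (hS hx)⟩
    · rintro S S' ⟨m, ρ, hρ, h⟩ ⟨m', ρ', hρ', h'⟩
      refine ⟨max m m', min ρ ρ', lt_min hρ hρ', ?_⟩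
      rintro x (hx | hx)
      · obtain ⟨i, hi, h1⟩ := h x hx
        exact ⟨i, hi.trans (le_max_left _ _), fun w hw hd => h1 w hw (hd.trans_le (min_le_left _ _))⟩
      · obtain ⟨i, hi, h1⟩ := h' x hx
        exact ⟨i, hi.trans (le_max_right _ _), fun w hw hd => h1 w hw (hd.trans_le (min_le_right _ _))⟩
    · intro x hx
      obtain ⟨i, hi⟩ := h x hx
      obtain ⟨ρ, hρ, hb⟩ := Metric.mem_nhdsWithin_iff.1 hi
      have hc : g^[i] ⁻¹' (Metric.ball (g^[i] x) (ρ / 2)) ∈ 𝓝 x :=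
        (hg.iterate i).continuousAt.preimage_mem_nhds (Metric.ball_mem_nhds _ (by linarith))
      refine ⟨_, mem_nhdsWithin_of_mem_nhds hc, i, ρ / 2, by linarith, ?_⟩
      intro x' hx'
      refine ⟨i, le_rfl, fun w hw hd => hb ⟨?_, hw⟩⟩
      have := dist_triangle w (g^[i] x') (g^[i] x)
      have h2 : dist (g^[i] x') (g^[i] x) < ρ / 2 := hx'
      rw [Metric.mem_ball]
      linarith
  obtain ⟨r, hr, hrK⟩ := dist_pos_of_closed hK.closed hzK
  obtain ⟨ε, hε, t, h1, h2, h3⟩ := trap_seq hg m (min r ρ) (lt_min hr hρ)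
  have key : ∀ q, ReachIn g Y K ε q → q ∈ Y ∧ ∃ x ∈ K, ∃ τ ≤ m, (∀ w ∈ Y,
      dist w (g^[τ] x) < ρ → w ∈ K) ∧ ∃ i ≤ τ, dist q (g^[i] x) < t i := by
    intro q hq
    induction hq with
    | @base k hk =>
      obtain ⟨τ, hτ, h4⟩ := hm k hk
      exact ⟨hKY hk, k, hk, τ, hτ, h4, 0, Nat.zero_le _, by simpa using hε.trans_le h1⟩
    | @step p q hp hq hd ih =>
      obtain ⟨hpY, x, hx, τ, hτ, h4, i, hi, hdi⟩ := ih
      refine ⟨hq, ?_⟩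
      rcases hi.eq_or_lt with rfl | hlt
      · have hpK : p ∈ K := h4 p hpY (hdi.trans_le ((h2 i hτ).trans (min_le_right _ _)))
        obtain ⟨τ', hτ', h4'⟩ := hm (g p) (hK.maps hpK)
        exact ⟨g p, hK.maps hpK, τ', hτ', h4', 0, Nat.zero_le _, by
          rw [dist_comm]; exact hd.trans_le h1⟩
      · refine ⟨x, hx, τ, hτ, h4, i + 1, hlt, ?_⟩
        rw [iterate_succ_apply']
        exact h3 i (by omega) _ _ hdi q hd
  obtain ⟨-, x, hx, τ, hτ, -, i, hi, hd⟩ := key z (hNT z hzY ε hε)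
  have := hrK _ (hK.iter i hx)
  have := (h2 i (by omega)).trans (min_le_left _ _)
  linarith

end

def AB {X : Type*} [TopologicalSpace X] (Y K : Set X) (n : ℕ) : Prop :=
  ∀ S : Finset X, (∀ s ∈ S, s ∈ Y ∧ s ∉ K) →
    (∀ s ∈ S, ∀ s' ∈ S, s ≠ s' → ∀ k ∈ K, s ∉ seg k s') → S.card ≤ n

def IHn {X : Type*} [MetricSpace X] (g : X → X) (n : ℕ) : Prop :=
  ∀ Y K : Set X, InvC g Y → InvC g K → K ⊆ Y → NT g Y K → AB Y K n →
    ∀ y ∈ Y, y ∉ K → Lim g y K → False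

section
set_option linter.unusedSectionVars false
set_option linter.unusedVariables false
variable {X : Type*} [MetricSpace X] [CompactSpace X]

lemma AB.mono {Y K K' : Set X} {n : ℕ} (h : AB Y K n) (hK : K ⊆ K') : AB Y K' n :=
  fun S h1 h2 => h S (fun s hs => ⟨(h1 s hs).1, fun hk => (h1 s hs).2 (hK hk)⟩)
    (fun s hs s' hs' hne k hk => h2 s hs s' hs' hne k (hK hk))

lemma lim_iter {g : X → X} {K : Set X} {x : X} {n : ℕ} (h : Lim g (g^[n] x) K) : Lim g x K := by
  intro U hU hKU
  have := h U hU hKU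
  obtain ⟨a, ha⟩ := eventually_atTop.1 this
  refine eventually_atTop.2 ⟨a + n, fun i hi => ?_⟩
  have h1 := ha (i - n) (by omega)
  rwa [← iterate_add_apply, Nat.sub_add_cancel (by omega)] at h1

lemma lim_mem {g : X → X} {K : Set X} (hK : InvC g K) {x : X} {n : ℕ} (h : g^[n] x ∈ K) :
    Lim g x K := by
  apply lim_iter (n := n)
  intro U hU hKU
  exact Eventually.of_forall fun i => hKU (hK.iter i h)

lemma limK_nhds {g : X → X} {Y K : Set X} (hY : InvC g Y) (hK : InvC g K) {x : X} {n : ℕ}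
    (hx : x ∈ Y) (h : K ∈ 𝓝[Y] (g^[n] x)) : Lim g x K :=
  lim_mem hK (mem_of_mem_nhdsWithin (hY.iter n hx) h)

lemma inv_of_mem {g : X → X} {K : Set X} (hK : InvC g K) {x : X} {n : ℕ} (h : g^[n] x ∉ K) :
    x ∉ K := fun hx => h (hK.iter n hx)

lemma one_div_exists {r : ℝ} (hr : 0 < r) : ∃ j : ℕ, 1 / ((j : ℝ) + 1) < r :=
  exists_nat_one_div_lt hr

/- a point of the germ close to b precedes q -/
lemma germ_lt (T : TL X) {K : Set X} {b d q x : X} {j : ℕ} (hx : x ∈ Germ K b d j) (hxK : x ∉ K)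
    (hq : q ∈ seg b d) (hj : 1 / ((j : ℝ) + 1) < dist q b) : x ∈ seg b q ∧ x ≠ q := by
  obtain ⟨h1, h2⟩ : x ∈ seg b d ∧ seg b x ⊆ Metric.closedBall b (1 / ((j : ℝ) + 1)) :=
    hx.resolve_left hxK
  have hn : q ∉ seg b x := fun h => by
    have := h2 h
    rw [Metric.mem_closedBall] at this
    linarith
  refine ⟨(T.cmp h1 hq).resolve_right hn, ?_⟩
  rintro rfl
  exact hn (right_mem _ _)

theorem lemmaC (T : TL X) {g : X → X} (hg : Continuous g) (hns : ¬ Horseshoe g) {n : ℕ}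
    (IH : IHn g n) {Y K : Set X} (hY : InvC g Y) (hK : InvC g K) (hKY : K ⊆ Y)
    (hAB : AB Y K (n + 1)) {b d : X} (hd : d ∈ Y) (hdK : d ∉ K) (hb : Gt K b d)
    {z : X} (hz : z ∈ ⋂ j, Gen g (Germ K b d j)) (hzK : z ∉ K) (hzl : Lim g z K)
    (hq : ∀ j, ∃ q ∈ Germ K b d j, q ∉ K ∧ Lim g q K) : False := by
  have hH := germ_HT T hK hY hKY hb.1 hd
  by_cases hc : ∃ p ∈ ⋂ j, Gen g (Germ K b d j), SC K d p
  · obtain ⟨p, hp, hdp⟩ := hc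
    have hbp : Gt K b p := T.sc_gate hb hdp
    have hbn : b ∉ seg d p := fun h => hdp b h hb.1
    obtain ⟨m, hm⟩ := T.gate_ex (T.closed d p) ⟨d, left_mem _ _⟩ hbn
    have hmd : m ∈ seg b d := by
      rw [seg_symm]; exact T.gate_mem hm (T.conn _ _) (left_mem _ _)
    have hmp : m ∈ seg b p := by
      rw [seg_symm]; exact T.gate_mem hm (T.conn _ _) (right_mem _ _)
    have hmb : b ≠ m := by rintro rfl; exact hbn hm.1
    obtain ⟨m', hm', hm'b, hm'm, -⟩ := T.near hmb one_pos
    have hm'd : m' ∈ seg b d := T.subl hmd hm'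
    have pred : ∀ q ∈ seg b m', q ∉ K → ∃ x ∈ seg b q, x ≠ q ∧ x ∉ K ∧ ∃ P, g^[P] x = q := by
      intro q hq hqK
      have hqb : q ≠ b := by rintro rfl; exact hqK hb.1
      obtain ⟨j, hj⟩ := one_div_exists (dist_pos.2 hqb)
      have hqm : q ∈ seg b m := T.subl hm' hq
      have hqp : q ≠ p := by
        rintro rfl
        have h1 : m = q := T.antisymm b _ _ hmp hqm
        subst h1
        exact hm'm (T.antisymm b _ _ hm' hq)
      have hR : q ∈ Fw g (Germ K b d j) :=
        T.clos (Fw_pre hg hK (hH.pre j) (hH.sub j)) (sub_Fw (hH.sub j hb.1)) (mem_iInter.1 hp j)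
          (T.subl hmp hqm) hqp
      obtain ⟨P, x, hx, hxq⟩ := mem_Fw.1 hR
      have hxK : x ∉ K := inv_of_mem hK (n := P) (by rwa [hxq])
      obtain ⟨h1, h2⟩ := germ_lt T hx hxK (T.subl hm'd hq) hj
      exact ⟨x, h1, h2, hxK, P, hxq⟩
    obtain ⟨j, hj⟩ := one_div_exists (dist_pos.2 hm'b)
    obtain ⟨q, hqG, hqK, hql⟩ := hq j
    obtain ⟨hqm', -⟩ := germ_lt T hqG hqK hm'd hj
    obtain ⟨x, hx, hxq, hxK, P, hP⟩ := pred q hqm' hqK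
    obtain ⟨x', hx', hxx', hxK', P', hP'⟩ := pred x (T.subl hqm' hx) hxK
    refine hns (HL T hg (P := P) (P' := P + P') hK (T.gate_sub hb (T.subl hm'd hqm')) hql hx hxq ?_ hx' hxx' ?_ hP ?_)
    · rintro rfl; exact hxK hb.1
    · rintro rfl; exact hxK' hb.1
    · rw [iterate_add_apply, hP', hP]
  · push Not at hc
    refine IH _ K (hH.H_inv T hg hK) hK hH.K_sub (hH.H_NT hg hK) ?_ z hz hzK hzl
    intro S hS hSa
    classical
    have hdS : d ∉ S := fun h => hc d (hS d h).1 (fun w hw => by rwa [T.seg_self hw])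
    have := hAB (insert d S) ?_ ?_
    · rw [Finset.card_insert_of_notMem hdS] at this
      omega
    · intro s hs
      rcases Finset.mem_insert.1 hs with rfl | hs
      · exact ⟨hd, hdK⟩
      · exact ⟨hH.H_sub hY (hS s hs).1, (hS s hs).2⟩
    · have key : ∀ s ∈ S, ∃ k' ∈ K, k' ∈ seg d s := by
        intro s hs
        have := hc s (hS s hs).1
        unfold SC at this
        push Not at this
        obtain ⟨w, h1, h2⟩ := this
        exact ⟨w, h2, h1⟩
      intro s hs s' hs' hne k hk
      rcases Finset.mem_insert.1 hs with h1 | hs1 <;> rcases Finset.mem_insert.1 hs' with h2 | hs2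
      · exact absurd (h1.trans h2.symm) hne
      · rw [h1]
        obtain ⟨k', h1, h2⟩ := key s' hs2
        exact T.sep hK.pre hdK hk h1 h2
      · rw [h2]
        obtain ⟨k', h3, h4⟩ := key s hs1
        rw [seg_symm] at h4
        exact T.sep hK.pre (hS s hs1).2 hk h3 h4
      · exact hSa s hs1 s' hs2 hne k hk

def TT (M Y : Set X) (j : ℕ) : Set X :=
  {z | ∃ m ∈ M, ∃ u ∈ Y, dist m u < 1 / ((j : ℝ) + 1) ∧ z ∈ seg m u}

lemma one_div_anti {i j : ℕ} (hij : i ≤ j) : 1 / ((j : ℝ) + 1) ≤ 1 / ((i : ℝ) + 1) := by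
  have : (i : ℝ) ≤ j := by exact_mod_cast hij
  apply one_div_le_one_div_of_le <;> [positivity; linarith]

lemma TT_HT (T : TL X) {g : X → X} {Y K : Set X} (hK : InvC g K) (hY : InvC g Y) (hKY : K ⊆ Y) :
    HT g Y K (TT K Y) := by
  have hsub : ∀ j, K ⊆ TT K Y j := fun j k hk =>
    ⟨k, hk, k, hKY hk, by rw [dist_self]; positivity, left_mem _ _⟩
  refine ⟨?_, ?_, hsub, ?_, ?_⟩
  · rintro i j hij z ⟨m, hm, u, hu, hd, hz⟩
    exact ⟨m, hm, u, hu, hd.trans_le (one_div_anti hij), hz⟩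
  · intro j
    obtain ⟨k, hk⟩ := hK.ne
    apply isPreconnected_of_forall k
    rintro z ⟨m, hm, u, hu, hd, hz⟩
    refine ⟨K ∪ seg m u, union_subset (hsub j) fun w hw => ⟨m, hm, u, hu, hd, hw⟩, Or.inl hk,
      Or.inr hz, IsPreconnected.union m hm (left_mem _ _) hK.pre (T.conn _ _)⟩
  · rintro j z ⟨m, hm, u, hu, hd, hz⟩
    exact seg_sub hY.pre (hKY hm) hu hz
  · intro η hη
    obtain ⟨δ, hδ, hl⟩ := T.lc η hη
    obtain ⟨j, hj⟩ := one_div_exists hδ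
    refine ⟨j, ?_⟩
    rintro z ⟨m, hm, u, hu, hd, hz⟩
    exact ⟨m, hm, hl m u (hd.trans hj) hz⟩

theorem weak_start (T : TL X) {g : X → X} (hg : Continuous g) (hns : ¬ Horseshoe g) {n : ℕ}
    (IH : IHn g n) {Y M : Set X} (hY : InvC g Y) (hM : InvC g M) (hMY : M ⊆ Y)
    (hAB : AB Y M (n + 1)) {y : X} (hy : y ∈ Y) (hyM : y ∉ M) (hl : Lim g y M) :
    ∃ K, InvC g K ∧ M ⊆ K ∧ K ⊆ Y ∧ y ∉ K ∧ ∃ n0, K ∈ 𝓝[Y] (g^[n0] y) := by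
  have hH := TT_HT T hM hY hMY
  by_cases hc : ∃ j, y ∉ Gen g (TT M Y j)
  · obtain ⟨j, hj⟩ := hc
    refine ⟨_, Gen_inv hg hM (hH.pre j) (hH.sub j), (hH.sub j).trans sub_Gen,
      Gen_sub hY (hH.le j), hj, ?_⟩
    have hp : (0 : ℝ) < 1 / ((j : ℝ) + 1) := by positivity
    obtain ⟨n0, hn0⟩ := (hl _ (Metric.isOpen_thickening (δ := 1 / ((j : ℝ) + 1)) (E := M))
      (Metric.self_subset_thickening hp _)).exists
    obtain ⟨m, hm, hd⟩ := Metric.mem_thickening_iff.1 hn0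
    refine ⟨n0, mem_of_superset ?_ (sub_Gen (T := TT M Y j))⟩
    have : Metric.ball m (1 / ((j : ℝ) + 1)) ∈ 𝓝 (g^[n0] y) :=
      Metric.isOpen_ball.mem_nhds hd
    filter_upwards [mem_nhdsWithin_of_mem_nhds this, self_mem_nhdsWithin] with u hu huY
    exact ⟨m, hm, u, huY, by rw [dist_comm]; exact hu, right_mem _ _⟩
  · exfalso
    push Not at hc
    have hyH : y ∈ ⋂ j, Gen g (TT M Y j) := mem_iInter.2 hc
    have hnp : ∀ p, 1 ≤ p → g^[p] y ≠ y := by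
      intro p hp hper
      have h1 : ∀ i, g^[p * i] y = y := by
        intro i
        induction i with
        | zero => rfl
        | succ i ih => rw [Nat.mul_succ, iterate_add_apply, hper, ih]
      have h2 := hl {y}ᶜ isOpen_compl_singleton (fun k hk => by rintro rfl; exact hyM hk)
      have h3 : Tendsto (fun i => p * i) atTop atTop := tendsto_id.const_mul_atTop' hp
      obtain ⟨i, hi⟩ := (h3.eventually h2).exists
      exact hi (h1 i)
    have hpre : ∀ z : {z // z ∈ (⋂ j, Gen g (TT M Y j)) ∧ z ∉ M},
        ∃ w : {z // z ∈ (⋂ j, Gen g (TT M Y j)) ∧ z ∉ M}, g w.1 = z.1 := by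
      rintro ⟨z, hz, hzM⟩
      obtain ⟨w, hw, hwz⟩ := hH.H_pre hg hM hz hzM
      exact ⟨⟨w, hw, fun h => hzM (hwz ▸ hM.maps h)⟩, hwz⟩
    choose pr hpr using hpre
    let s : ℕ → {z // z ∈ (⋂ j, Gen g (TT M Y j)) ∧ z ∉ M} := fun i => pr^[i] ⟨y, hyH, hyM⟩
    have hs : ∀ i, g^[i] (s i).1 = y := by
      intro i
      induction i with
      | zero => rfl
      | succ i ih =>
        have : s (i + 1) = pr (s i) := iterate_succ_apply' _ _ _
        rw [this, iterate_succ_apply, hpr, ih]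
    have hs' : ∀ i k, g^[k] (s (i + k)).1 = (s i).1 := by
      intro i k
      induction k with
      | zero => rfl
      | succ k ih =>
        have : s (i + (k + 1)) = pr (s (i + k)) := iterate_succ_apply' _ _ _
        rw [this, iterate_succ_apply, hpr, ih]
    have hinj : Injective fun i => (s i).1 := by
      have aux : ∀ i k, (s i).1 = (s (i + (k + 1))).1 → False := by
        intro i k h
        have h1 := hs' i (k + 1)
        rw [← h] at h1
        apply hnp (k + 1) (by omega)
        rw [← hs i, ← iterate_add_apply, add_comm, iterate_add_apply, h1]
      intro i k h
      rcases lt_trichotomy i k with h1 | h1 | h1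
      · obtain ⟨l, rfl⟩ := Nat.exists_eq_add_of_lt h1
        exact (aux i l h).elim
      · exact h1
      · obtain ⟨l, rfl⟩ := Nat.exists_eq_add_of_lt h1
        exact (aux k l h.symm).elim
    have hFw : ∀ j, y ∈ Fw g (TT M Y j) := by
      intro j
      by_contra hyR
      classical
      have hsR : ∀ i, (s i).1 ∉ Fw g (TT M Y j) := by
        intro i h
        apply hyR
        rw [← hs i]
        exact Fw_maps.iterate i h
      have := hAB ((Finset.range (n + 2)).image fun i => (s i).1) ?_ ?_
      · rw [Finset.card_image_of_injective _ hinj, Finset.card_range] at this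
        omega
      · intro a ha
        obtain ⟨i, -, rfl⟩ := Finset.mem_image.1 ha
        exact ⟨hH.H_sub hY (s i).2.1, (s i).2.2⟩
      · intro a ha a' ha' hne k hk hmem
        obtain ⟨i, -, rfl⟩ := Finset.mem_image.1 ha
        obtain ⟨i', -, rfl⟩ := Finset.mem_image.1 ha'
        exact hsR i (T.clos (Fw_pre hg hM (hH.pre j) (hH.sub j)) (sub_Fw (hH.sub j hk))
          (mem_iInter.1 (s i').2.1 j) hmem hne)
    have hex : ∀ j, ∃ x ∈ TT M Y j, ∃ k, g^[k] x = y := by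
      intro j
      obtain ⟨k, x, hx, h⟩ := mem_Fw.1 (hFw j)
      exact ⟨x, hx, k, h⟩
    choose x hx k hk using hex
    have hxM : ∀ j, x j ∉ M := fun j => inv_of_mem hM (n := k j) (by rwa [hk])
    obtain ⟨b, -, φ, hφ, hlim⟩ := isCompact_univ.tendsto_subseq (x := x) (fun j => mem_univ _)
    have hbM : b ∈ M := by
      rw [← hM.closed.closure_eq, Metric.mem_closure_iff]
      intro ε hε
      obtain ⟨j, hj⟩ := hH.thin (ε / 2) (by linarith)
      have e1 := hlim.eventually (Metric.ball_mem_nhds b (half_pos hε))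
      obtain ⟨i, hi1, hi2⟩ := (e1.and (eventually_ge_atTop j)).exists
      obtain ⟨m, hm, hd⟩ := hj (x (φ i)) (hH.anti (hi2.trans (hφ.id_le i)) (hx _))
      refine ⟨m, hm, ?_⟩
      have h1 : dist (x (φ i)) b < ε / 2 := hi1
      have := dist_triangle_left b m (x (φ i))
      linarith
    have hne : ∀ j, (x ∘ φ) j ≠ b := fun j h => hxM (φ j) (by
      have : x (φ j) = b := h
      rwa [this])
    obtain ⟨j0, hj0⟩ := T.lin hlim hne
    set d := (x ∘ φ) j0 with hd
    have hdY : d ∈ Y := hH.le _ (hx _)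
    have hdM : d ∉ M := hxM _
    have hgate : Gt M b d := by
      refine ⟨hbM, fun w hw hwM => ?_⟩
      by_contra hwb
      obtain ⟨j, h1, h2⟩ := (hj0.and_eventually (hlim.eventually (T.small hwb))).exists
      rcases T.cmp h1 hw with h3 | h3
      · exact hxM _ (seg_sub hM.pre hbM hwM h3)
      · exact h2 h3
    have hgerm : ∀ j', ∃ i, x i ∈ Germ M b d j' := by
      intro j'
      obtain ⟨δ, hδ, hlc⟩ := T.lc (1 / ((j' : ℝ) + 1)) (by positivity)
      obtain ⟨j, h1, h2⟩ := (hj0.and_eventually (hlim.eventually (Metric.ball_mem_nhds b hδ))).exists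
      refine ⟨φ j, Or.inr ⟨h1, (hlc b _ ?_).trans Metric.ball_subset_closedBall⟩⟩
      rw [dist_comm]
      exact h2
    refine lemmaC T hg hns IH hY hM hMY hAB hdY hdM hgate (z := y) ?_ hyM hl ?_
    · rw [mem_iInter]
      intro j'
      obtain ⟨i, hi⟩ := hgerm j'
      exact subset_closure (mem_Fw.2 ⟨k i, x i, hi, hk i⟩)
    · intro j'
      obtain ⟨i, hi⟩ := hgerm j'
      exact ⟨x i, hi, hxM i, lim_iter (n := k i) (by rwa [hk i])⟩

lemma nopen (g : X → X) (hg : Continuous g) (Y K : Set X) (m : ℕ) :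
    IsOpen {v | K ∈ 𝓝[Y] (g^[m] v)} := by
  have : IsOpen {v | K ∈ 𝓝[Y] v} := by
    rw [isOpen_iff_mem_nhds]
    intro v hv
    obtain ⟨U, hU, hvU, hs⟩ := mem_nhdsWithin.1 hv
    filter_upwards [hU.mem_nhds hvU] with w hw
    exact mem_nhdsWithin.2 ⟨U, hU, hw, hs⟩
  exact this.preimage (hg.iterate m)

theorem lemmaG (T : TL X) {g : X → X} (hg : Continuous g) (hns : ¬ Horseshoe g)
    {Y K : Set X} (hY : InvC g Y) (hK : InvC g K) (hKY : K ⊆ Y)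
    {b q : X} (hq : q ∈ Y) (hqK : q ∉ K) (hb : Gt K b q) {N : ℕ} (hN : K ∈ 𝓝[Y] (g^[N] q)) :
    ∃ r ∈ seg b q, ∃ N', K ∈ 𝓝[Y] (g^[N'] r) ∧ Gt (Gen g (K ∪ seg b r)) r q ∧
      q ∉ Gen g (K ∪ seg b r) := by
  have hqb : q ≠ b := by rintro rfl; exact hqK hb.1
  obtain ⟨ε, hε, hball⟩ := Metric.isOpen_iff.1 (nopen g hg Y K N) q hN
  obtain ⟨q', hq', hq'q, hq'b, hq'ball⟩ := T.near hqb hε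
  rw [seg_symm] at hq'
  have hN' : K ∈ 𝓝[Y] (g^[N] q') := hball (hq'ball (right_mem _ _))
  have hq'K : q' ∉ K := T.gate_not_mem hb hq' hq'b
  have hq'Y : q' ∈ Y := seg_sub hY.pre (hKY hb.1) hq hq'
  obtain ⟨r, hr, hrb, hrN, hrp⟩ : ∃ r ∈ seg b q', r ≠ b ∧ (∃ N', K ∈ 𝓝[Y] (g^[N'] r)) ∧
      ∀ x ∈ seg b r, x ≠ r → ∀ n, g^[n] x ≠ r := by
    by_cases hc : ∀ x ∈ seg b q', x ≠ q' → ∀ n, g^[n] x ≠ q'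
    · exact ⟨q', right_mem _ _, hq'b, ⟨N, hN'⟩, hc⟩
    · push Not at hc
      obtain ⟨x, hx, hxq, P, hP⟩ := hc
      have hxK : x ∉ K := inv_of_mem hK (n := P) (by rwa [hP])
      have hxb : x ≠ b := by rintro rfl; exact hxK hb.1
      refine ⟨x, hx, hxb, ⟨N + P, by rwa [iterate_add_apply, hP]⟩, ?_⟩
      intro x' hx' hxx' P' hP'
      have hxK' : x' ∉ K := inv_of_mem hK (n := P') (by rwa [hP'])
      refine hns (HL T hg (P := P) (P' := P + P') hK (T.gate_sub hb hq') (limK_nhds hY hK hq'Y hN')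
        hx hxq hxb hx' hxx' ?_ hP ?_)
      · rintro rfl; exact hxK' hb.1
      · rw [iterate_add_apply, hP', hP]
  have hrq : r ∈ seg b q := T.subl hq' hr
  have hrK : r ∉ K := T.gate_not_mem hb hrq hrb
  have hrq' : q ≠ r := by
    rintro rfl
    exact hq'q (T.antisymm b _ _ hq' hr)
  have hKV : ∀ z ∈ K, r ∉ seg b z := fun z hz h => hrK (seg_sub hK.pre hb.1 hz h)
  have hR : Fw g (K ∪ seg b r) ⊆ {z | r ∈ seg b z ∧ z ≠ r}ᶜ := by
    rintro z hz ⟨hz1, hz2⟩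
    obtain ⟨n, v, hv, rfl⟩ := mem_Fw.1 hz
    rcases hv with hv | hv
    · exact hKV _ (hK.iter n hv) hz1
    · have h1 : r ∈ g^[n] '' seg b v :=
        T.cross ((T.conn b v).image _ (hg.iterate n).continuousOn) ⟨v, right_mem _ _, rfl⟩
          ⟨b, left_mem _ _, rfl⟩ hz1 (hKV _ (hK.iter n hb.1))
      obtain ⟨u, hu, hur⟩ := h1
      have h2 : u = r := by
        by_contra hne
        exact hrp u (T.subl hv hu) hne n hur
      subst h2
      have h3 : v = u := T.antisymm b _ _ hv hu
      subst h3
      exact hz2 hur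
  have hcl : Gen g (K ∪ seg b r) ⊆ {z | r ∈ seg b z ∧ z ≠ r}ᶜ :=
    closure_minimal hR (T.beyopen b r).isClosed_compl
  obtain ⟨N', hN'r⟩ := hrN
  have hG : Gt (Gen g (K ∪ seg b r)) r q := by
    refine ⟨sub_Gen (Or.inr (right_mem _ _)), fun w hw hwK => ?_⟩
    by_contra hne
    refine hcl hwK ⟨?_, hne⟩
    rw [seg_symm]
    rw [seg_symm] at hw hrq
    exact T.between hrq hw
  exact ⟨r, hrq, N', hN'r, hG, fun h => hrq' (hG.2 q (right_mem _ _) h)⟩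

end

def Good {X : Type*} [MetricSpace X] (g : X → X) (Y K : Set X) (c : X) : Prop :=
  c ∈ Y ∧ c ∉ K ∧ ∃ b, Gt K b c ∧ ∃ m, K ∈ 𝓝[Y] (g^[m] b)

def PN {X : Type*} [MetricSpace X] (g : X → X) (Y M : Set X) (N : ℕ) : Prop :=
  ∃ K, InvC g K ∧ M ⊆ K ∧ K ⊆ Y ∧ ∃ S : Finset X, S.card = N ∧ (∀ c ∈ S, Good g Y K c) ∧
    ∀ c ∈ S, ∀ c' ∈ S, c ≠ c' → ¬ SC K c c'

section
set_option linter.unusedSectionVars false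
set_option linter.unusedVariables false
variable {X : Type*} [MetricSpace X] [CompactSpace X]

lemma sc_mono {K K' : Set X} (h : K ⊆ K') {c v : X} (hs : SC K' c v) : SC K c v :=
  fun w hw hk => hs w hw (h hk)

lemma PN_le (T : TL X) {g : X → X} {Y M : Set X} {n N : ℕ} (hAB : AB Y M n) (h : PN g Y M N) :
    N ≤ n := by
  obtain ⟨K, hK, hMK, hKY, S, rfl, hS, hi⟩ := h
  refine hAB.mono hMK S (fun s hs => ⟨(hS s hs).1, (hS s hs).2.1⟩) ?_
  intro s hs s' hs' hne k hk
  have := hi s hs s' hs' hne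
  unfold SC at this
  push Not at this
  obtain ⟨w, h1, h2⟩ := this
  exact T.sep hK.pre (hS s hs).2.1 hk h2 h1

lemma maxi (T : TL X) {g : X → X} (hg : Continuous g) {Y K0 : Set X} (hY : InvC g Y)
    (hK0 : InvC g K0) (hKY0 : K0 ⊆ Y) (S : Finset X) (hS : ∀ c ∈ S, Good g Y K0 c)
    (hi : ∀ c ∈ S, ∀ c' ∈ S, c ≠ c' → ¬ SC K0 c c') :
    ∃ K, InvC g K ∧ K0 ⊆ K ∧ K ⊆ Y ∧ (∀ c ∈ S, Good g Y K c) ∧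
      (∀ c ∈ S, ∀ c' ∈ S, c ≠ c' → ¬ SC K c c') ∧
      ∀ K1, InvC g K1 → K ⊆ K1 → K1 ⊆ Y → (∀ c ∈ S, ∀ v ∈ K1, ¬ SC K c v) → K1 ⊆ K := by
  set F : Set (Set X) := {K1 | InvC g K1 ∧ K0 ⊆ K1 ∧ K1 ⊆ Y ∧ ∀ c ∈ S, ∀ v ∈ K1, ¬ SC K0 c v} with hF
  have h0 : K0 ∈ F := ⟨hK0, Subset.refl _, hKY0, fun c hc v hv h => h v (right_mem _ _) hv⟩
  obtain ⟨k0, hk0⟩ := hK0.ne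
  have hsub : K0 ⊆ closure (⋃₀ F) := (subset_sUnion_of_mem h0).trans subset_closure
  have hsc : ∀ c ∈ S, ∀ v ∈ closure (⋃₀ F), ¬ SC K0 c v := by
    intro c hc
    apply closure_minimal (t := {v | SC K0 c v}ᶜ) _ (T.sc_open hK0.closed c).isClosed_compl
    rintro v ⟨K1, hK1, hv⟩
    exact hK1.2.2.2 c hc v hv
  have hiff : ∀ c ∈ S, ∀ v, SC K0 c v → SC (closure (⋃₀ F)) c v := by
    intro c hc v h w hw hwK
    exact hsc c hc w hwK fun u hu => h u (T.subl hw hu)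
  refine ⟨closure (⋃₀ F), ⟨isClosed_closure, ?_, ⟨k0, hsub hk0⟩, ?_⟩, hsub, ?_, ?_, ?_, ?_⟩
  · exact (isPreconnected_sUnion k0 F (fun s hs => hs.2.1 hk0) fun s hs => hs.1.pre).closure
  · apply MapsTo.closure _ hg
    rintro v ⟨K1, hK1, hv⟩
    exact ⟨K1, hK1, hK1.1.maps hv⟩
  · exact closure_minimal (sUnion_subset fun s hs => hs.2.2.1) hY.closed
  · intro c hc
    obtain ⟨h1, h2, b, hb, m, hm⟩ := hS c hc
    refine ⟨h1, fun h => hsc c hc c h fun w hw => by rwa [T.seg_self hw], b, ⟨hsub hb.1, ?_⟩, m,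
      mem_of_superset hm hsub⟩
    intro w hw hwK
    by_contra hne
    exact hsc c hc w hwK (TL.sc_symm (T.sc_of_seg hb hw hne))
  · intro c hc c' hc' hne h
    exact hi c hc c' hc' hne (sc_mono hsub h)
  · intro K1 h1 h2 h3 h4
    refine subset_closure.trans' (subset_sUnion_of_mem ⟨h1, hsub.trans h2, h3, ?_⟩)
    intro c hc v hv h
    exact h4 c hc v hv (hiff c hc v h)

theorem stepK (T : TL X) {g : X → X} (hg : Continuous g) (hns : ¬ Horseshoe g) {n : ℕ}
    (IH : IHn g n) {Y K : Set X} (hY : InvC g Y) (hK : InvC g K) (hKY : K ⊆ Y) (hNT : NT g Y K)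
    (hAB : AB Y K (n + 1)) (S : Finset X) (hSn : S.Nonempty) (hS : ∀ c ∈ S, Good g Y K c)
    (hi : ∀ c ∈ S, ∀ c' ∈ S, c ≠ c' → ¬ SC K c c')
    (Mx : ∀ K1, InvC g K1 → K ⊆ K1 → K1 ⊆ Y → (∀ c ∈ S, ∀ v ∈ K1, ¬ SC K c v) → K1 ⊆ K) :
    ∃ K', InvC g K' ∧ K ⊆ K' ∧ K' ⊆ Y ∧ ∃ q, q ∉ S ∧ Good g Y K' q ∧ (∀ c ∈ S, Good g Y K' c) ∧
      (∀ c ∈ S, ¬ SC K' q c) := by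
  obtain ⟨c0, hc0⟩ := hSn
  have : Nonempty X := ⟨c0⟩
  have hex : ∀ c ∈ S, ∃ b m, Gt K b c ∧ K ∈ 𝓝[Y] (g^[m] b) := fun c hc =>
    let ⟨_, _, b, hb, m, hm⟩ := hS c hc
    ⟨b, m, hb, hm⟩
  choose! B m hBm using hex
  by_cases hc : ∀ d ∈ Y, d ∉ K → ∃ c ∈ S, SC K c d
  · exfalso
    refine trap hg hK hKY hNT (hS c0 hc0).1 (hS c0 hc0).2.1 fun x hx => ?_
    by_cases hxB : ∃ c ∈ S, B c = x
    · obtain ⟨c, hcS, rfl⟩ := hxB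
      exact ⟨m c, (hBm c hcS).2⟩
    · push Not at hxB
      refine ⟨0, ?_⟩
      have hev : ∀ᶠ u in 𝓝 x, ∀ c ∈ S, B c ∉ seg x u :=
        (Finset.eventually_all S).2 fun c hcS => T.small (hxB c hcS)
      show K ∈ 𝓝[Y] x
      filter_upwards [mem_nhdsWithin_of_mem_nhds hev, self_mem_nhdsWithin] with u hu huY
      by_contra huK
      obtain ⟨c, hcS, hcu⟩ := hc u huY huK
      exact hu c hcS (T.gate_mem (T.sc_gate (hBm c hcS).1 hcu) hK.pre hx)
  push Not at hc
  obtain ⟨d, hd, hdK, hcd⟩ := hc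
  obtain ⟨b, hb⟩ := T.gate_ex hK.closed hK.ne hdK
  have hH := germ_HT T hK hY hKY hb.1 hd
  have hbd : b ≠ d := by rintro rfl; exact hdK hb.1
  have hnot : ∀ j, ∃ c ∈ S, ∃ v ∈ Gen g (Germ K b d j), SC K c v := by
    intro j
    by_contra hcon
    push Not at hcon
    have h1 := Mx _ (Gen_inv hg hK (hH.pre j) (hH.sub j)) ((hH.sub j).trans sub_Gen)
      (Gen_sub hY (hH.le j)) hcon
    obtain ⟨x, hx, hxb, -, hxs⟩ := T.near hbd (ε := 1 / ((j : ℝ) + 1)) (by positivity)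
    exact T.gate_not_mem hb hx hxb
      (h1 (sub_Gen (Or.inr ⟨hx, hxs.trans Metric.ball_subset_closedBall⟩)))
  have hU : ∀ c ∈ S, ∀ v, SC K c v → ∃ u ∈ seg (B c) v, u ≠ v ∧ u ∉ K ∧ K ∈ 𝓝[Y] (g^[m c] u) := by
    intro c hcS v hv
    have hgv := T.sc_gate (hBm c hcS).1 hv
    have hvB : B c ≠ v := fun h => hv v (right_mem _ _) (h ▸ hgv.1)
    obtain ⟨ε, hε, hball⟩ := Metric.isOpen_iff.1 (nopen g hg Y K (m c)) (B c) (hBm c hcS).2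
    obtain ⟨u, hu, hub, huv, hus⟩ := T.near hvB hε
    exact ⟨u, hu, huv, T.gate_not_mem hgv hu hub, hball (hus (right_mem _ _))⟩
  have hQ : ∀ j, ∃ q ∈ Germ K b d j, q ∉ K ∧ ∃ N, K ∈ 𝓝[Y] (g^[N] q) := by
    intro j
    obtain ⟨c, hcS, v, hv, hcv⟩ := hnot j
    obtain ⟨u, hu, huv, huK, hun⟩ := hU c hcS v hcv
    have h1 : u ∈ Fw g (Germ K b d j) :=
      T.clos (Fw_pre hg hK (hH.pre j) (hH.sub j)) (sub_Fw (hH.sub j (hBm c hcS).1.1)) hv hu huv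
    obtain ⟨i, q, hq, hqu⟩ := mem_Fw.1 h1
    refine ⟨q, hq, inv_of_mem hK (n := i) (by rwa [hqu]), m c + i, ?_⟩
    rwa [iterate_add_apply, hqu]
  have hHK : (⋂ j, Gen g (Germ K b d j)) ⊆ K := by
    refine Mx _ (hH.H_inv T hg hK) hH.K_sub (hH.H_sub hY) ?_
    intro c hcS v hv hcv
    obtain ⟨u, hu, huv, huK, hun⟩ := hU c hcS v hcv
    have huH := seg_sub (hH.H_inv T hg hK).pre (hH.K_sub (hBm c hcS).1.1) hv hu
    refine lemmaC T hg hns IH hY hK hKY hAB hd hdK hb (z := u) huH huK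
      (limK_nhds hY hK (hH.H_sub hY huH) hun) fun j => ?_
    obtain ⟨q, h1, h2, N, h3⟩ := hQ j
    exact ⟨q, h1, h2, limK_nhds hY hK (hH.le j h1) h3⟩
  have hUc : ∀ c ∈ S, ∃ U : Set X, IsOpen U ∧ K ⊆ U ∧ c ∉ U ∧
      ∀ u ∈ U, SC K c u → K ∈ 𝓝[Y] (g^[m c] u) := by
    intro c hcS
    obtain ⟨ε, hε, hball⟩ := Metric.isOpen_iff.1 (nopen g hg Y K (m c)) (B c) (hBm c hcS).2
    obtain ⟨δ, hδ, hl⟩ := T.lc (ε / 2) (by linarith)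
    obtain ⟨r, hr, hrK⟩ := dist_pos_of_closed hK.closed (hS c hcS).2.1
    refine ⟨Metric.thickening (min δ r) K, Metric.isOpen_thickening,
      Metric.self_subset_thickening (lt_min hδ hr) _, ?_, ?_⟩
    · intro h
      obtain ⟨k, hk, hd⟩ := Metric.mem_thickening_iff.1 h
      have := hrK k hk
      have := hd.trans_le (min_le_right _ _)
      linarith
    · intro u hu hcu
      obtain ⟨k, hk, hd⟩ := Metric.mem_thickening_iff.1 hu
      apply hball
      have h1 := hl k u (by rw [dist_comm]; exact hd.trans_le (min_le_left _ _))
      have h2 : dist (B c) k < ε / 2 := h1 (T.gate_mem (T.sc_gate (hBm c hcS).1 hcu) hK.pre hk)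
      have h3 : dist u k < ε / 2 := h1 (right_mem _ _)
      have := dist_triangle_right u (B c) k
      rw [Metric.mem_ball]
      linarith
  choose! U hUo hUK hUc hUn using hUc
  obtain ⟨j, hj⟩ := hH.H_open (isOpen_biInter_finset (s := S) (f := U) hUo)
    (hHK.trans (subset_iInter₂ hUK))
  obtain ⟨q, hqG, hqK, N, hN⟩ := hQ j
  obtain ⟨hqd, hqb⟩ : q ∈ seg b d ∧ seg b q ⊆ Metric.closedBall b (1 / ((j : ℝ) + 1)) :=
    hqG.resolve_left hqK
  have hqY : q ∈ Y := hH.le j hqG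
  obtain ⟨r, hr, N', hN', hGr, hqG'⟩ := lemmaG T hg hns hY hK hKY hqY hqK (T.gate_sub hb hqd) hN
  have hK' : InvC g (Gen g (K ∪ seg b r)) :=
    Gen_inv hg hK (IsPreconnected.union b hb.1 (left_mem _ _) hK.pre (T.conn _ _)) subset_union_left
  have hKK' : K ⊆ Gen g (K ∪ seg b r) := subset_union_left.trans sub_Gen
  have hGG : Gen g (K ∪ seg b r) ⊆ Gen g (Germ K b d j) := by
    apply Gen_mono
    apply union_subset_union_right
    intro w hw
    have hw' : w ∈ seg b q := T.subl hr hw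
    exact ⟨T.subl hqd hw', (T.subl hw').trans hqb⟩
  have hK'Y : Gen g (K ∪ seg b r) ⊆ Y := hGG.trans (Gen_sub hY (hH.le j))
  have hqne : q ≠ b := by rintro rfl; exact hqK hb.1
  have hqdS : SC K q d := T.sc_of_seg hb hqd hqne
  refine ⟨_, hK', hKK', hK'Y, q, fun h => hcd q h hqdS, ⟨hqY, hqG', r, hGr, N',
    mem_of_superset hN' hKK'⟩, ?_, ?_⟩
  · intro c hcS
    have hcU := hGG.trans (hj.trans (iInter₂_subset c hcS))
    have hcK' : c ∉ Gen g (K ∪ seg b r) := fun h => hUc c hcS (hcU h)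
    obtain ⟨b', hb'⟩ := T.gate_ex hK'.closed hK'.ne hcK'
    refine ⟨(hS c hcS).1, hcK', b', hb', m c, mem_of_superset ?_ hKK'⟩
    by_cases hbK : b' ∈ K
    · have h1 : Gt K b' c := ⟨hbK, fun w hw hwK => hb'.2 w hw (hKK' hwK)⟩
      rw [T.gate_unique h1 (hBm c hcS).1 hK.pre]
      exact (hBm c hcS).2
    · apply hUn c hcS b' (hcU hb'.1)
      apply TL.sc_symm
      intro w hw hwK
      rw [hb'.2 w hw (hKK' hwK)] at hwK
      exact hbK hwK
  · intro c hcS h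
    exact hcd c hcS (T.sc_trans (TL.sc_symm (sc_mono hKK' h)) hqdS)

theorem main_all (T : TL X) {g : X → X} (hg : Continuous g) (hns : ¬ Horseshoe g) :
    ∀ n, IHn g n := by
  intro n
  induction n with
  | zero =>
    intro Y K hY hK hKY hNT hAB y hy hyK hl
    have := hAB {y} (by simpa using ⟨hy, hyK⟩) (by
      intro s hs s' hs' hne
      rw [Finset.mem_singleton] at hs hs'
      exact absurd (hs.trans hs'.symm) hne)
    simp at this
  | succ n IH =>
    intro Y M hY hM hMY hNT hAB y hy hyM hl
    have hP : ∀ N, PN g Y M (N + 1) := by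
      intro N
      induction N with
      | zero =>
        obtain ⟨K, hK, hMK, hKY, hyK, n0, hn0⟩ := weak_start T hg hns IH hY hM hMY hAB hy hyM hl
        obtain ⟨b, hb⟩ := T.gate_ex hK.closed hK.ne hyK
        obtain ⟨r, hr, N', hN', hGr, hyG⟩ := lemmaG T hg hns hY hK hKY hy hyK hb hn0
        have hKK' : K ⊆ Gen g (K ∪ seg b r) := subset_union_left.trans sub_Gen
        refine ⟨Gen g (K ∪ seg b r), Gen_inv hg hK
          (IsPreconnected.union b hb.1 (left_mem _ _) hK.pre (T.conn _ _)) subset_union_left,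
          hMK.trans hKK', Gen_sub hY (union_subset hKY fun w hw =>
            seg_sub hY.pre (hKY hb.1) hy (T.subl hr hw)), {y}, rfl, ?_, ?_⟩
        · intro c hc
          rw [Finset.mem_singleton.1 hc]
          exact ⟨hy, hyG, r, hGr, N', mem_of_superset hN' hKK'⟩
        · intro s hs s' hs' hne
          rw [Finset.mem_singleton] at hs hs'
          exact absurd (hs.trans hs'.symm) hne
      | succ N ih =>
        classical
        obtain ⟨K0, hK0, hMK0, hKY0, S, hcard, hS0, hi0⟩ := ih
        obtain ⟨K, hK, hKK, hKY, hS, hi, Mx⟩ := maxi T hg hY hK0 hKY0 S hS0 hi0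
        have hSn : S.Nonempty := Finset.card_pos.1 (by omega)
        obtain ⟨K', hK', hKK', hK'Y, q, hqS, hq, hS', hi'⟩ := stepK T hg hns IH hY hK hKY
          (hNT.mono (hMK0.trans hKK)) (hAB.mono (hMK0.trans hKK)) S hSn hS hi Mx
        refine ⟨K', hK', hMK0.trans (hKK.trans hKK'), hK'Y, insert q S, ?_, ?_, ?_⟩
        · rw [Finset.card_insert_of_notMem hqS, hcard]
        · intro c hc
          rcases Finset.mem_insert.1 hc with h | h
          · rw [h]; exact hq
          · exact hS' c h
        · intro c hc c' hc' hne h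
          rcases Finset.mem_insert.1 hc with h1 | h1 <;> rcases Finset.mem_insert.1 hc' with h2 | h2
          · exact hne (h1.trans h2.symm)
          · rw [h1] at h
            exact hi' c' h2 h
          · rw [h2] at h
            exact hi' c h1 (TL.sc_symm h)
          · exact hi c h1 c' h2 hne (sc_mono hKK' h)
    have := PN_le T hAB (hP (n + 1))
    omega

end

section
set_option linter.unusedSectionVars false
set_option linter.unusedVariables false
variable {X : Type*} [MetricSpace X] [CompactSpace X]

lemma reach_near {g : X → X} {M : Set X} {e1 e2 : ℝ} {w z : X} (h : ReachIn g univ M e1 w)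
    (hw : w ∉ M) (hd : dist w z < e2) : ReachIn g univ M (e1 + e2) z := by
  cases h with
  | base h => exact absurd h hw
  | @step p q hp hq hpq =>
    have hpos : 0 ≤ e2 := dist_nonneg.trans hd.le
    refine .step (hp.mono (Subset.refl _) (Subset.refl _) (by linarith)) (mem_univ _) ?_
    have := dist_triangle (g p) w z
    linarith

lemma reach_seg (T : TL X) {g : X → X} (hg : Continuous g) {M : Set X} (hM : InvC g M) {m0 : X}
    (hm0 : m0 ∈ M) {ε : ℝ} (hε : 0 < ε) : ∃ δ > 0, ∀ z, ReachIn g univ M δ z →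
      ∀ v ∈ seg m0 z, ReachIn g univ M ε v := by
  obtain ⟨δ, hδ, hl⟩ := T.lc ε hε
  refine ⟨δ, hδ, fun z hz => ?_⟩
  induction hz with
  | @base k hk => exact fun v hv => .base (seg_sub hM.pre hm0 hk hv)
  | @step p q hp hq hd ih =>
    intro v hv
    rcases T.tri m0 (g p) q hv with h | h
    · have hc : IsPreconnected (M ∪ g '' seg m0 p) :=
        IsPreconnected.union (g m0) (hM.maps hm0) ⟨m0, left_mem _ _, rfl⟩ hM.pre
          ((T.conn _ _).image _ hg.continuousOn)
      rcases seg_sub hc (Or.inl hm0) (Or.inr ⟨p, right_mem _ _, rfl⟩) h with h1 | ⟨v', hv', rfl⟩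
      · exact .base h1
      · exact .step (ih v' hv') (mem_univ _) (by rwa [dist_self])
    · have h1 : dist v (g p) < ε := hl _ _ hd h
      exact .step (ih p (right_mem _ _)) (mem_univ _) (by rwa [dist_comm])

theorem core (T : TL X) {g : X → X} (hg : Continuous g) (hns : ¬ Horseshoe g) {M : Set X}
    (hM : InvC g M) {y : X} (hl : Lim g y M) (hy : ∀ ε > 0, ReachIn g univ M ε y) : y ∈ M := by
  by_contra hyM
  set Λ : Set X := {z | ∀ ε > 0, ReachIn g univ M ε z} with hΛ
  set V : ℕ → Set X := fun j => closure {z | ReachIn g univ M (1 / ((j : ℝ) + 1)) z} with hV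
  have hVΛ : (⋂ j, V j) ⊆ Λ := by
    intro z hz ε hε
    by_cases hzM : z ∈ M
    · exact .base hzM
    obtain ⟨r, hr, hrM⟩ := dist_pos_of_closed hM.closed hzM
    obtain ⟨j, hj⟩ := one_div_exists (half_pos hε)
    obtain ⟨w, hw, hwz⟩ := Metric.mem_closure_iff.1 (mem_iInter.1 hz j) (min r (ε / 2))
      (lt_min hr (half_pos hε))
    have hwM : w ∉ M := fun h => by
      have := hrM w h
      have := hwz.trans_le (min_le_left _ _)
      linarith
    rw [dist_comm] at hwz
    exact (reach_near hw hwM (hwz.trans_le (min_le_right _ _))).mono (Subset.refl _)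
      (Subset.refl _) (by linarith)
  have hΛV : Λ ⊆ ⋂ j, V j := subset_iInter fun j z hz => subset_closure (hz _ (by positivity))
  have hMΛ : M ⊆ Λ := fun k hk ε hε => .base hk
  obtain ⟨m0, hm0⟩ := hM.ne
  have hInv : InvC g Λ := by
    refine ⟨?_, ?_, ⟨m0, hMΛ hm0⟩, ?_⟩
    · rw [Subset.antisymm hΛV hVΛ]
      exact isClosed_iInter fun j => isClosed_closure
    · apply isPreconnected_of_forall m0
      intro z hz
      refine ⟨seg m0 z, ?_, left_mem _ _, right_mem _ _, T.conn _ _⟩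
      intro v hv ε hε
      obtain ⟨δ, hδ, h⟩ := reach_seg T hg hM hm0 hε
      exact h z (hz δ hδ) v hv
    · intro z hz ε hε
      exact .step (hz ε hε) (mem_univ _) (by rwa [dist_self])
  have hNT : NT g Λ M := by
    intro z hz ε hε
    obtain ⟨δ, hδ, hu⟩ := unif hg (half_pos hε)
    have hη : 0 < min δ (ε / 4) := lt_min hδ (by linarith)
    have hd : Directed (fun x1 x2 => x1 ⊇ x2) V := by
      have : ∀ i j, i ≤ j → V j ⊆ V i := fun i j hij => closure_mono fun z hz =>
        ReachIn.mono (Subset.refl _) (Subset.refl _) (one_div_anti hij) hz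
      exact fun i j => ⟨max i j, this _ _ (le_max_left _ _), this _ _ (le_max_right _ _)⟩
    obtain ⟨j, hj⟩ := exists_subset_nhds_of_isCompact' hd (fun j => isClosed_closure.isCompact)
      (fun j => isClosed_closure) (U := Metric.thickening (min δ (ε / 4)) Λ)
      (fun x hx => Metric.isOpen_thickening.mem_nhds
        (Metric.self_subset_thickening hη _ (hVΛ hx)))
    have hj0 : (0 : ℝ) < 1 / ((j : ℝ) + 1) := by positivity
    set ρ := min (1 / ((j : ℝ) + 1)) (ε / 4) with hρ
    have hρ0 : 0 < ρ := lt_min hj0 (by linarith)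
    have hρ1 : ρ ≤ ε / 4 := min_le_right _ _
    have hnear : ∀ w, ReachIn g univ M ρ w → ∃ p ∈ Λ, dist w p < min δ (ε / 4) := fun w hw =>
      Metric.mem_thickening_iff.1 (hj (subset_closure
        (hw.mono (Subset.refl _) (Subset.refl _) (min_le_left _ _))))
    have key : ∀ w, ReachIn g univ M ρ w → ∃ p ∈ Λ, dist w p < δ ∧ ReachIn g Λ M ε p := by
      intro w hw
      induction hw with
      | @base k hk => exact ⟨k, hMΛ hk, by rwa [dist_self], .base hk⟩
      | @step p q hp hq hd ih =>
        obtain ⟨p', hp', hd', hr⟩ := ih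
        obtain ⟨q', hq', hd''⟩ := hnear q (.step hp hq hd)
        refine ⟨q', hq', hd''.trans_le (min_le_left _ _), .step hr hq' ?_⟩
        have h1 := hu _ _ hd'
        have h2 := hd''.trans_le (min_le_right _ _)
        have h3 := dist_triangle_left (g p') q' (g p)
        have h4 := dist_triangle (g p) q q'
        linarith
    cases hz ρ hρ0 with
    | base h => exact .base h
    | @step p q hp hq hd =>
      obtain ⟨p', hp', hd', hr⟩ := key p hp
      refine .step hr hz ?_
      have h1 := hu _ _ hd'
      have h3 := dist_triangle_left (g p') z (g p)
      linarith
  obtain ⟨N, hN⟩ := T.anti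
  have hAB : AB Λ M N := fun S _ h2 => hN S m0 fun s hs s' hs' hne => h2 s hs s' hs' hne m0 hm0
  exact main_all T hg hns N Λ M hInv hM hMΛ hNT hAB y hy hyM hl

lemma pseudo {f : X → X} (hf : Continuous f) (s : ℕ) : ∀ ε > 0, ∃ δ > 0, ∀ c : ℕ → X,
    (∀ i, dist (f (c i)) (c (i + 1)) < δ) → ∀ i, dist (f^[s] (c i)) (c (i + s)) < ε := by
  induction s with
  | zero =>
    intro ε hε
    exact ⟨1, one_pos, fun c _ i => by simpa using hε⟩
  | succ s ih =>
    intro ε hε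
    obtain ⟨δ', hδ', hu⟩ := unif hf (half_pos hε)
    obtain ⟨δ, hδ, h⟩ := ih δ' hδ'
    refine ⟨min δ (ε / 2), lt_min hδ (half_pos hε), fun c hc i => ?_⟩
    have h1 := hu _ _ (h c (fun i => (hc i).trans_le (min_le_left _ _)) i)
    have h2 := (hc (i + s)).trans_le (min_le_right _ _)
    rw [iterate_succ_apply', ← add_assoc]
    have := dist_triangle (f (f^[s] (c i))) (f (c (i + s))) (c (i + s + 1))
    linarith

lemma cr_orbit {f : X → X} {y : X} (hy : y ∈ chainRecurrentSet f) {δ : ℝ} (hδ : 0 < δ) :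
    ∃ c : ℕ → X, c 0 = y ∧ (∀ i, dist (f (c i)) (c (i + 1)) < δ) ∧ ∃ n, 1 ≤ n ∧
      ∀ i, c (n * i) = y := by
  obtain ⟨n, hn, c, h0, hcn, hc⟩ := hy δ hδ
  refine ⟨fun i => c (i % n), by simpa using h0, ?_, n, hn, fun i => by simpa using h0⟩
  intro i
  have hlt := Nat.mod_lt i (show n > 0 by omega)
  have h1 := hc (i % n) hlt
  have h2 : c ((i + 1) % n) = c (i % n + 1) := by
    rcases Nat.lt_or_ge (i % n + 1) n with h | h
    · rw [Nat.add_mod, Nat.mod_eq_of_lt (a := i % n + 1 % n)]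
      · rw [Nat.mod_eq_of_lt (a := 1) (by omega)]
      · rw [Nat.mod_eq_of_lt (a := 1) (by omega)]; exact h
    · have h3 : i % n + 1 = n := by omega
      have h4 : (i + 1) % n = 0 := by
        rw [← Nat.mod_add_mod, h3, Nat.mod_self]
      rw [h3, h4, h0, hcn]
  show dist (f (c (i % n))) (c ((i + 1) % n)) < δ
  rw [h2]
  exact h1

lemma cr_reach {f : X → X} (hf : Continuous f) {s : ℕ} {y : X}
    (hy : y ∈ chainRecurrentSet f) {M : Set X} (hl : Lim f^[s] y M) {ε : ℝ} (hε : 0 < ε) :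
    ReachIn f^[s] univ M ε y := by
  have hg : Continuous f^[s] := hf.iterate s
  obtain ⟨η, hη, hu⟩ := unif hg (half_pos hε)
  obtain ⟨k, hk⟩ := (hl _ (Metric.isOpen_thickening (δ := η / 2) (E := M))
    (Metric.self_subset_thickening (half_pos hη) _)).exists
  obtain ⟨m, hm, hd⟩ := Metric.mem_thickening_iff.1 hk
  obtain ⟨δ1, hδ1, h1⟩ := pseudo hg k (η / 2) (half_pos hη)
  obtain ⟨δ2, hδ2, h2⟩ := pseudo hf s (min δ1 (ε / 2)) (lt_min hδ1 (half_pos hε))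
  obtain ⟨c, hc0, hc, n, hn, hcn⟩ := cr_orbit hy hδ2
  have h3 : ∀ i, dist (f^[s] (c (s * i))) (c (s * (i + 1))) < min δ1 (ε / 2) := fun i =>
    h2 c hc (s * i)
  have h4 := h1 (fun i => c (s * i)) (fun i => (h3 i).trans_le (min_le_left _ _)) 0
  simp only [mul_zero, zero_add, hc0] at h4
  have h5 : dist m (c (s * k)) < η := by
    have := dist_triangle_left m (c (s * k)) ((f^[s])^[k] y)
    linarith
  have h6 : ∀ j, ReachIn f^[s] univ M ε (c (s * (k + 1 + j))) := by
    intro j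
    induction j with
    | zero =>
      refine .step (.base hm) (mem_univ _) ?_
      have := hu _ _ h5
      have h7 := (h3 k).trans_le (min_le_right _ _)
      have := dist_triangle (f^[s] m) (f^[s] (c (s * k))) (c (s * (k + 1)))
      simp only [add_zero]
      linarith
    | succ j ih =>
      refine .step ih (mem_univ _) ?_
      have h7 := (h3 (k + 1 + j)).trans_le (min_le_right _ _)
      have h8 : k + 1 + (j + 1) = k + 1 + j + 1 := by ring
      rw [h8]
      linarith
  have h9 : k + 1 ≤ n * (k + 1) := Nat.le_mul_of_pos_left _ (by omega)
  have h10 := h6 (n * (k + 1) - (k + 1))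
  rw [Nat.add_sub_cancel' h9, show s * (n * (k + 1)) = n * (s * (k + 1)) by ring, hcn] at h10
  exact h10

lemma lim_two {g : X → X} (hg : Continuous g) {A R : Set X} (hA : IsClosed A) (hR : IsClosed R)
    (hAR : Disjoint A R) (mA : MapsTo g A A) (mR : MapsTo g R R) {y : X} (h : Lim g y (A ∪ R)) :
    Lim g y A ∨ Lim g y R := by
  obtain ⟨VA, VR, oA, oR, sA, sR, hd⟩ := normal_separation hA hR hAR
  have aux : ∀ (A R VA VR : Set X), IsOpen VA → IsOpen VR → A ⊆ VA → R ⊆ VR → Disjoint VA VR →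
      Lim g y (A ∪ R) → (∃ k0, ∀ k ≥ k0, g^[k] y ∈ VA) → Lim g y A := by
    intro A R VA VR oA oR sA sR hd h ⟨k0, hk0⟩ U hU hAU
    filter_upwards [h (U ∪ VR) (hU.union oR) (union_subset_union hAU sR), eventually_ge_atTop k0]
      with k h1 h2
    exact h1.resolve_right fun h3 => disjoint_left.1 hd (hk0 k h2) h3
  have hW := h ((VA ∩ g ⁻¹' VA) ∪ (VR ∩ g ⁻¹' VR))
    ((oA.inter (oA.preimage hg)).union (oR.inter (oR.preimage hg)))
    (union_subset_union (fun a ha => ⟨sA ha, sA (mA ha)⟩) (fun a ha => ⟨sR ha, sR (mR ha)⟩))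
  obtain ⟨k0, hk0⟩ := eventually_atTop.1 hW
  rcases hk0 k0 le_rfl with h0 | h0
  · left
    refine aux A R VA VR oA oR sA sR hd h ⟨k0, fun k hk => ?_⟩
    suffices g^[k] y ∈ VA ∩ g ⁻¹' VA from this.1
    induction k, hk using Nat.le_induction with
    | base => exact h0
    | succ k hk ih =>
      have h1 : g^[k + 1] y ∈ VA := by rw [iterate_succ_apply']; exact ih.2
      exact (hk0 (k + 1) (by omega)).resolve_right fun h3 => disjoint_left.1 hd h1 h3.1
  · right
    refine aux R A VR VA oR oA sR sA hd.symm (by rwa [union_comm]) ⟨k0, fun k hk => ?_⟩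
    suffices g^[k] y ∈ VR ∩ g ⁻¹' VR from this.1
    induction k, hk using Nat.le_induction with
    | base => exact h0
    | succ k hk ih =>
      have h1 : g^[k + 1] y ∈ VR := by rw [iterate_succ_apply']; exact ih.2
      exact (hk0 (k + 1) (by omega)).resolve_left fun h3 => disjoint_left.1 hd h3.1 h1

lemma lim_fin {g : X → X} (hg : Continuous g) {M : ℕ → Set X} {y : X} (F : Finset ℕ)
    (hc : ∀ i ∈ F, IsClosed (M i)) (hm : ∀ i ∈ F, MapsTo g (M i) (M i))
    (hd : ∀ i ∈ F, ∀ j ∈ F, i ≠ j → Disjoint (M i) (M j))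
    (h : Lim g y (⋃ i ∈ F, M i)) : ∃ i ∈ F, Lim g y (M i) := by
  classical
  induction F using Finset.induction_on with
  | empty =>
    obtain ⟨n, hn⟩ := (h ∅ isOpen_empty (by simp)).exists
    exact hn.elim
  | insert a F ha ih =>
    rw [Finset.set_biUnion_insert] at h
    have hF : ∀ i ∈ F, i ∈ insert a F := fun i hi => Finset.mem_insert_of_mem hi
    have d1 : Disjoint (M a) (⋃ i ∈ F, M i) := by
      rw [disjoint_iUnion₂_right]
      exact fun i hi => hd a (Finset.mem_insert_self _ _) i (hF i hi) (by
        rintro rfl; exact ha hi)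
    have d2 : MapsTo g (⋃ i ∈ F, M i) (⋃ i ∈ F, M i) := by
      intro z hz
      obtain ⟨i, hi, hz⟩ := mem_iUnion₂.1 hz
      exact mem_iUnion₂.2 ⟨i, hi, hm i (hF i hi) hz⟩
    rcases lim_two hg (hc a (Finset.mem_insert_self _ _))
      (isClosed_biUnion_finset fun i hi => hc i (hF i hi)) d1
      (hm a (Finset.mem_insert_self _ _)) d2 h with h1 | h1
    · exact ⟨a, Finset.mem_insert_self _ _, h1⟩
    · obtain ⟨i, hi, h2⟩ := ih (fun i hi => hc i (hF i hi)) (fun i hi => hm i (hF i hi))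
        (fun i hi j hj => hd i (hF i hi) j (hF j hj)) h1
      exact ⟨i, hF i hi, h2⟩

lemma omega_lim {f : X → X} {x : X} {K : Set X} (h : omegaLimitSet f x ⊆ K) : Lim f x K := by
  intro U hU hKU
  have hd : Directed (fun x1 x2 => x1 ⊇ x2) fun n : ℕ => closure ((fun k => f^[k] x) '' Set.Ici n) :=
    fun i j => ⟨max i j, closure_mono (image_mono (Ici_subset_Ici.2 (le_max_left _ _))),
      closure_mono (image_mono (Ici_subset_Ici.2 (le_max_right _ _)))⟩
  obtain ⟨n, hn⟩ := exists_subset_nhds_of_isCompact' hd (fun j => isClosed_closure.isCompact)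
    (fun j => isClosed_closure) (U := U) (fun z hz => hU.mem_nhds (hKU (h hz)))
  exact eventually_atTop.2 ⟨n, fun k hk => hn (subset_closure ⟨k, hk, rfl⟩)⟩

lemma lim_pow {f : X → X} {x : X} {K : Set X} (h : Lim f x K) {s : ℕ} (hs : 1 ≤ s) :
    Lim f^[s] x K := by
  intro U hU hKU
  have h3 : Tendsto (fun i => s * i) atTop atTop := tendsto_id.const_mul_atTop' hs
  filter_upwards [h3.eventually (h U hU hKU)] with i hi
  rwa [iterate_mul] at hi

lemma horse_pow {f : X → X} {s : ℕ} (hs : 1 ≤ s) (h : Horseshoe f^[s]) : Horseshoe f := by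
  obtain ⟨Q, B, h1, h2, h3, h4, h5, n1, n2, h6, h7, h8, h9⟩ := h
  rw [← iterate_mul] at h8 h9
  exact ⟨Q, B, h1, h2, h3, h4, h5, s * n1, s * n2, Nat.mul_pos hs h6, Nat.mul_pos hs h7, h8, h9⟩

end

lemma arc_props {X : Type*} [TopologicalSpace X] {I : Set X} (h : IsArc I) :
    IsCompact I ∧ IsPreconnected I ∧ I.Nonempty := by
  obtain ⟨e⟩ := h
  have : CompactSpace I := e.symm.compactSpace
  have h2 : PreconnectedSpace (Set.Icc (0 : ℝ) 1) :=
    Subtype.preconnectedSpace isPreconnected_Icc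
  have h3 : IsPreconnected (univ : Set I) := by
    have := h2.isPreconnected_univ.image e.symm e.symm.continuous.continuousOn
    rwa [image_univ, e.symm.surjective.range_eq] at this
  refine ⟨isCompact_iff_compactSpace.2 this, ?_, ?_⟩
  · have := h3.image (Subtype.val : I → X) continuous_subtype_val.continuousOn
    rwa [image_univ, Subtype.range_coe] at this
  · exact ⟨_, (e.symm ⟨0, by simp⟩).2⟩

/-- In the situation of Statement 9, for every `n ≥ 0` all chain recurrent
preimages of `x` under `f^n` also lie in the orbit of the periodic arc. -/
theorem chainRecurrent_preimages_subset_arcOrbit {X : Type*} [MetricSpace X] (hX : IsTree X)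
    (f : X → X) (hf : Continuous f) (h0 : topEntropy f = 0)
    {x : X} (hx : x ∈ chainRecurrentSet f) (hxp : x ∉ Function.periodicPts f)
    {I : Set X} {s : ℕ} (hI : IsPeriodicArc f I s)
    (hω : omegaLimitSet f x ⊆ arcOrbit f I s) :
    ∀ n : ℕ, f^[n] ⁻¹' {x} ∩ chainRecurrentSet f ⊆ arcOrbit f I s := by
  rintro n y ⟨hyx, hy⟩
  have hyx : f^[n] y = x := hyx
  have : CompactSpace X := hX.1
  have T := tl_of_tree hX
  obtain ⟨hA, hs, hmaps, hdis⟩ := hI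
  obtain ⟨hIc, hIp, hIn⟩ := arc_props hA
  have hg : Continuous f^[s] := hf.iterate s
  have hns : ¬ Horseshoe f^[s] := fun h => entropy_pos_of_horseshoe (horse_pow hs h) h0
  have hl : Lim f y (arcOrbit f I s) := lim_iter (n := n) (by rw [hyx]; exact omega_lim hω)
  have hM : ∀ i, InvC f^[s] (f^[i] '' I) := by
    intro i
    refine ⟨(hIc.image (hf.iterate i)).isClosed, hIp.image _ (hf.iterate i).continuousOn,
      hIn.image _, ?_⟩
    rintro _ ⟨a, ha, rfl⟩
    refine ⟨f^[s] a, hmaps ha, ?_⟩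
    rw [← iterate_add_apply, ← iterate_add_apply, add_comm]
  obtain ⟨i, hi, hli⟩ := lim_fin hg (Finset.range s) (fun i _ => (hM i).closed)
    (fun i _ => (hM i).maps) (fun i hi j hj hne => by
      rcases lt_or_gt_of_ne hne with h | h
      · exact hdis i j h (Finset.mem_range.1 hj)
      · exact (hdis j i h (Finset.mem_range.1 hi)).symm) (lim_pow hl hs)
  exact mem_iUnion₂.2 ⟨i, hi, core T hg hns (hM i) hli fun ε hε => cr_reach hf hy hli hε⟩
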